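/- arXiv:1002.2352 — 2 statements merged into one kernel-verified Lean document; each statement's English description precedes it below -/
import Mathlib

section
/- Let A be a 4-dimensional absolute-valued real algebra. Then A satisfies the identity (x², x, x) = 0 (i.e. (x² x) x = x² (x x) for all x ∈ A, where x² = xx) if and only if A is isomorphic to ℍ or to *ℍ. -/
/-!
Averaging `φ (x y) ^ 2` over the unit ball of `y`, for a nonzero functional `φ`, gives a multiple of
`‖x‖ ^ 2`, because multiplication by a unit vector is an isometry; so the norm is Euclidean.
Kaplansky's trick turns the product into a unital composition algebra, which in dimension four is
the algebra of quaternions. Hence the original product is `f x * g y` on `ℍ` for linear isometries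
`f` and `g`, each of which has the form `x ↦ p x q` or `x ↦ p x̄ q`. Evaluating the identity
`(x², x, x) = 0` at `1`, `u` and `1 + u` for imaginary units `u` shows that, up to rescaling, only
`x y` and `x̄ y` survive.
-/

open MeasureTheory Metric Module
open scoped Quaternion RealInnerProductSpace

/-- A bilinear map is norm-multiplicative if the norm of a product is the product of the norms. For
a product `A →ₗ[ℝ] A →ₗ[ℝ] A` this says that `A` is an absolute-valued algebra. -/
def IsNormMultiplicative {E F G : Type*} [NormedAddCommGroup E] [NormedSpace ℝ E]
    [NormedAddCommGroup F] [NormedSpace ℝ F] [NormedAddCommGroup G] [NormedSpace ℝ G]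
    (B : E →ₗ[ℝ] F →ₗ[ℝ] G) : Prop :=
  ∀ x y, ‖B x y‖ = ‖x‖ * ‖y‖

section Averaging

variable {E F G : Type*} [NormedAddCommGroup E] [NormedSpace ℝ E] [NormedAddCommGroup F]
  [NormedSpace ℝ F] [NormedAddCommGroup G] [NormedSpace ℝ G]

theorem setIntegral_ball_comp_linearIsometryEquiv [MeasurableSpace F] [BorelSpace F]
    [MeasurableSpace G] [BorelSpace G] (e : F ≃ₗᵢ[ℝ] G) (d r : ℝ) (f : G → ℝ) :
    ∫ y in ball 0 r, f (e y) ∂μH[d] = ∫ z in ball 0 r, f z ∂μH[d] := by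
  have := (e.toIsometryEquiv.measurePreserving_hausdorffMeasure d).setIntegral_preimage_emb
    e.toHomeomorph.measurableEmbedding f (ball 0 r)
  simpa using this

theorem integrableOn_ball_of_continuous {X : Type*} [PseudoMetricSpace X] [ProperSpace X]
    [MeasurableSpace X] [OpensMeasurableSpace X] {μ : Measure X} [IsFiniteMeasureOnCompacts μ]
    {f : X → ℝ} (hf : Continuous f) (x : X) (r : ℝ) :
    IntegrableOn f (ball x r) μ :=
  (hf.continuousOn.integrableOn_compact' (isCompact_closedBall x r)
    measurableSet_closedBall).mono_set ball_subset_closedBall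

theorem setIntegral_ball_sq_pos [ProperSpace E] [MeasurableSpace E] [BorelSpace E]
    {μ : Measure E} [IsFiniteMeasureOnCompacts μ] [μ.IsOpenPosMeasure] {φ : StrongDual ℝ E}
    (hφ : φ ≠ 0) {r : ℝ} (hr : 0 < r) : 0 < ∫ x in ball 0 r, φ x ^ 2 ∂μ := by
  refine (integral_nonneg fun x => sq_nonneg (φ x)).lt_of_ne' fun h => hφ ?_
  rw [integral_eq_zero_iff_of_nonneg (fun x => sq_nonneg (φ x))
    (integrableOn_ball_of_continuous (φ.continuous.pow 2) 0 r)] at h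
  have hzero : Set.EqOn (fun x => φ x ^ 2) 0 (ball 0 r) :=
    Measure.eqOn_open_of_ae_eq h isOpen_ball (φ.continuous.pow 2).continuousOn continuousOn_const
  have hnhds : (φ : E → ℝ) =ᶠ[nhds 0] 0 := by
    filter_upwards [ball_mem_nhds 0 hr] with x hx using pow_eq_zero_iff two_ne_zero |>.1 (hzero hx)
  simpa using hnhds.fderiv_eq (𝕜 := ℝ)

namespace IsNormMultiplicative

variable {B : E →ₗ[ℝ] F →ₗ[ℝ] G}

theorem flip (hB : IsNormMultiplicative B) : IsNormMultiplicative B.flip := fun x y => by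
  rw [LinearMap.flip_apply, hB, mul_comm]

/-- Left multiplication by a unit vector, as a linear isometry. -/
noncomputable def leftIsometryEquiv [FiniteDimensional ℝ F] [FiniteDimensional ℝ G]
    (hB : IsNormMultiplicative B) (hdim : finrank ℝ F = finrank ℝ G) {x : E} (hx : ‖x‖ = 1) :
    F ≃ₗᵢ[ℝ] G :=
  LinearIsometry.toLinearIsometryEquiv ⟨B x, fun y => by rw [hB, hx, one_mul]⟩ hdim

theorem leftIsometryEquiv_apply [FiniteDimensional ℝ F] [FiniteDimensional ℝ G]
    (hB : IsNormMultiplicative B) (hdim : finrank ℝ F = finrank ℝ G) {x : E} (hx : ‖x‖ = 1)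
    (y : F) : hB.leftIsometryEquiv hdim hx y = B x y :=
  rfl

/-- The Hausdorff measure is used because isometries between different spaces preserve it. -/
theorem setIntegral_ball_sq [FiniteDimensional ℝ F] [MeasurableSpace F] [BorelSpace F]
    [FiniteDimensional ℝ G] [MeasurableSpace G] [BorelSpace G] (hB : IsNormMultiplicative B)
    (hdim : finrank ℝ F = finrank ℝ G) (φ : StrongDual ℝ G) (d r : ℝ) (x : E) :
    ∫ y in ball 0 r, φ (B x y) ^ 2 ∂μH[d] = ‖x‖ ^ 2 * ∫ z in ball 0 r, φ z ^ 2 ∂μH[d] := by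
  rcases eq_or_ne x 0 with rfl | hx
  · simp
  have hunit : ‖‖x‖⁻¹ • x‖ = 1 := norm_smul_inv_norm hx
  rw [← setIntegral_ball_comp_linearIsometryEquiv (hB.leftIsometryEquiv hdim hunit) d r
    (fun z => φ z ^ 2), ← integral_const_mul]
  refine integral_congr_ae (.of_forall fun y => ?_)
  have : ‖x‖ ≠ 0 := norm_ne_zero_iff.2 hx
  simp only [leftIsometryEquiv_apply, map_smul, LinearMap.smul_apply, smul_eq_mul]
  field_simp

theorem parallelogram_law [FiniteDimensional ℝ F] [FiniteDimensional ℝ G] [Nontrivial G]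
    (hB : IsNormMultiplicative B) (hdim : finrank ℝ F = finrank ℝ G) (x y : E) :
    ‖x + y‖ * ‖x + y‖ + ‖x - y‖ * ‖x - y‖ = 2 * (‖x‖ * ‖x‖ + ‖y‖ * ‖y‖) := by
  borelize F G
  obtain ⟨φ, hφ⟩ := exists_ne (0 : StrongDual ℝ G)
  have hpos : 0 < ∫ w in ball 0 1, φ w ^ 2 ∂μH[finrank ℝ G] := setIntegral_ball_sq_pos hφ one_pos
  have hint (z : E) : IntegrableOn (fun w => φ (B z w) ^ 2) (ball 0 1) μH[finrank ℝ F] :=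
    integrableOn_ball_of_continuous
      ((φ.continuous.comp (B z).continuous_of_finiteDimensional).pow 2) 0 1
  have hint_add : ∫ w in ball 0 1, φ (B (x + y) w) ^ 2 + φ (B (x - y) w) ^ 2 ∂μH[finrank ℝ F] =
      ∫ w in ball 0 1, 2 * (φ (B x w) ^ 2 + φ (B y w) ^ 2) ∂μH[finrank ℝ F] := by
    refine integral_congr_ae (.of_forall fun w => ?_)
    simp only [map_add, map_sub, LinearMap.add_apply, LinearMap.sub_apply]
    ring
  rw [integral_add (hint _) (hint _), integral_const_mul,
    integral_add (hint _) (hint _)] at hint_add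
  simp only [hB.setIntegral_ball_sq hdim, hdim] at hint_add
  refine mul_right_cancel₀ hpos.ne' ?_
  linear_combination hint_add

end IsNormMultiplicative

end Averaging

section Composition

variable {E F G : Type*} [NormedAddCommGroup E] [InnerProductSpace ℝ E] [NormedAddCommGroup F]
  [InnerProductSpace ℝ F] [NormedAddCommGroup G] [InnerProductSpace ℝ G]

namespace IsNormMultiplicative

theorem inner_left {B : E →ₗ[ℝ] F →ₗ[ℝ] G} (hB : IsNormMultiplicative B) (x : E) (y z : F) :
    ⟪B x y, B x z⟫ = ‖x‖ ^ 2 * ⟪y, z⟫ := by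
  rw [real_inner_eq_norm_add_mul_self_sub_norm_mul_self_sub_norm_mul_self_div_two, ← map_add,
    real_inner_eq_norm_add_mul_self_sub_norm_mul_self_sub_norm_mul_self_div_two y z, hB, hB, hB]
  ring

theorem inner_right {B : E →ₗ[ℝ] F →ₗ[ℝ] G} (hB : IsNormMultiplicative B) (x y : E) (z : F) :
    ⟪B x z, B y z⟫ = ‖z‖ ^ 2 * ⟪x, y⟫ :=
  hB.flip.inner_left z x y

variable {B : E →ₗ[ℝ] F →ₗ[ℝ] F} {e x y : E}

theorem inner_apply_left_of_orthogonal (hB : IsNormMultiplicative B) (he : B e = .id)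
    (hx : ⟪e, x⟫ = 0) (v w : F) : ⟪B x v, w⟫ = -⟪v, B x w⟫ := by
  have hadd := hB.inner_right e x (v + w)
  have hv := hB.inner_right e x v
  have hw := hB.inner_right e x w
  simp only [he, LinearMap.id_apply, map_add, inner_add_left, inner_add_right, hx, mul_zero]
    at hadd hv hw
  rw [real_inner_comm]
  linarith

theorem apply_apply_of_orthogonal (hB : IsNormMultiplicative B) (he : B e = .id)
    (hx : ⟪e, x⟫ = 0) (v : F) : B x (B x v) = -(‖x‖ ^ 2 • v) := by
  refine ext_inner_right ℝ fun w => ?_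
  rw [hB.inner_apply_left_of_orthogonal he hx, hB.inner_left, inner_neg_left, real_inner_smul_left]

theorem apply_apply_comm_of_orthogonal (hB : IsNormMultiplicative B) (he : B e = .id)
    (hx : ⟪e, x⟫ = 0) (hy : ⟪e, y⟫ = 0) (hxy : ⟪x, y⟫ = 0) (v : F) :
    B x (B y v) = -B y (B x v) := by
  have hadd := hB.apply_apply_of_orthogonal he (x := x + y)
    (by rw [inner_add_right, hx, hy, add_zero]) v
  rw [norm_add_sq_real, hxy] at hadd
  simp only [map_add, LinearMap.add_apply, hB.apply_apply_of_orthogonal he hx,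
    hB.apply_apply_of_orthogonal he hy] at hadd
  linear_combination (norm := module) hadd

end IsNormMultiplicative

end Composition

/-- A unital absolute-valued product on an inner product space (that is, a Euclidean composition
algebra) with unit `e`. -/
structure IsUnitalComposition {V : Type*} [NormedAddCommGroup V] [InnerProductSpace ℝ V]
    (B : V →ₗ[ℝ] V →ₗ[ℝ] V) (e : V) : Prop where
  isNormMultiplicative : IsNormMultiplicative B
  norm_unit : ‖e‖ = 1
  unit_mul : B e = .id
  mul_unit : B.flip e = .id

namespace IsUnitalComposition

variable {V : Type*} [NormedAddCommGroup V] [InnerProductSpace ℝ V] {B : V →ₗ[ℝ] V →ₗ[ℝ] V}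
  {e x y : V}

theorem unit_mul_apply (h : IsUnitalComposition B e) (x : V) : B e x = x := by
  rw [h.unit_mul, LinearMap.id_apply]

theorem mul_unit_apply (h : IsUnitalComposition B e) (x : V) : B x e = x := by
  rw [← LinearMap.flip_apply, h.mul_unit, LinearMap.id_apply]

theorem flip (h : IsUnitalComposition B e) : IsUnitalComposition B.flip e :=
  ⟨h.isNormMultiplicative.flip, h.norm_unit, h.mul_unit, h.unit_mul⟩

theorem mul_mul_self_left (h : IsUnitalComposition B e) (hx : ⟪e, x⟫ = 0) (hx1 : ‖x‖ = 1) (y : V) :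
    B x (B x y) = -y := by
  rw [h.isNormMultiplicative.apply_apply_of_orthogonal h.unit_mul hx, hx1, one_pow, one_smul]

theorem mul_mul_self_right (h : IsUnitalComposition B e) (hx : ⟪e, x⟫ = 0) (hx1 : ‖x‖ = 1)
    (y : V) : B (B y x) x = -y :=
  h.flip.mul_mul_self_left hx hx1 y

theorem mul_self (h : IsUnitalComposition B e) (hx : ⟪e, x⟫ = 0) (hx1 : ‖x‖ = 1) :
    B x x = -e := by
  simpa only [h.mul_unit_apply] using h.mul_mul_self_left hx hx1 e

theorem mul_anticomm (h : IsUnitalComposition B e) (hx : ⟪e, x⟫ = 0) (hy : ⟪e, y⟫ = 0)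
    (hxy : ⟪x, y⟫ = 0) : B x y = -B y x := by
  simpa only [h.mul_unit_apply] using
    h.isNormMultiplicative.apply_apply_comm_of_orthogonal h.unit_mul hx hy hxy e

theorem inner_unit_mul (h : IsUnitalComposition B e) (hx : ⟪e, x⟫ = 0) (hxy : ⟪x, y⟫ = 0) :
    ⟪e, B x y⟫ = 0 := by
  have := h.isNormMultiplicative.inner_apply_left_of_orthogonal h.unit_mul hx e y
  rwa [h.mul_unit_apply, hxy, zero_eq_neg] at this

theorem inner_left_mul (h : IsUnitalComposition B e) (hy : ⟪e, y⟫ = 0) : ⟪x, B x y⟫ = 0 := by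
  simpa only [h.mul_unit_apply, hy, mul_zero] using h.isNormMultiplicative.inner_left x e y

theorem inner_right_mul (h : IsUnitalComposition B e) (hx : ⟪e, x⟫ = 0) : ⟪y, B x y⟫ = 0 :=
  h.flip.inner_left_mul hx

end IsUnitalComposition

/-- Vectors `i` and `j` that together with `e` are orthonormal. When `e` is the unit of a
four-dimensional unital composition algebra, `e`, `i`, `j` and the product `i j` play the roles of
the standard quaternions `1`, `i`, `j` and `k`. -/
structure QuaternionFrame {V : Type*} [NormedAddCommGroup V] [InnerProductSpace ℝ V] (e : V) where
  /-- The first imaginary unit. -/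
  i : V
  /-- The second imaginary unit. -/
  j : V
  orthonormal : Orthonormal ℝ ![e, i, j]

namespace QuaternionFrame

variable {V : Type*} [NormedAddCommGroup V] [InnerProductSpace ℝ V] {B : V →ₗ[ℝ] V →ₗ[ℝ] V}
  {e : V}

theorem nonempty_of_norm_eq_one (he : ‖e‖ = 1) (hdim : finrank ℝ V = 4) :
    Nonempty (QuaternionFrame e) := by
  have : FiniteDimensional ℝ V := Module.finite_of_finrank_pos (by lia)
  obtain ⟨b, hb⟩ := Orthonormal.exists_orthonormalBasis_extension_of_card_eq (𝕜 := ℝ)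
    (ι := Fin 4) (by simp [hdim]) (v := fun _ => e) (s := {0})
    ⟨fun _ => he, fun _ _ hne => (hne (Subsingleton.elim _ _)).elim⟩
  refine ⟨b 1, b 2, ?_⟩
  convert b.orthonormal.comp ![0, 1, 2] (by decide) using 1
  ext n
  fin_cases n <;> simp [hb 0 rfl]

variable (f : QuaternionFrame e)

theorem norm_i : ‖f.i‖ = 1 := f.orthonormal.norm_eq_one 1

theorem norm_j : ‖f.j‖ = 1 := f.orthonormal.norm_eq_one 2

theorem inner_unit_i : ⟪e, f.i⟫ = 0 := f.orthonormal.inner_eq_zero (i := 0) (j := 1) (by decide)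

theorem inner_unit_j : ⟪e, f.j⟫ = 0 := f.orthonormal.inner_eq_zero (i := 0) (j := 2) (by decide)

theorem inner_i_j : ⟪f.i, f.j⟫ = 0 := f.orthonormal.inner_eq_zero (i := 1) (j := 2) (by decide)

theorem norm_k (h : IsUnitalComposition B e) : ‖B f.i f.j‖ = 1 := by
  rw [h.isNormMultiplicative, f.norm_i, f.norm_j, one_mul]

theorem inner_unit_k (h : IsUnitalComposition B e) : ⟪e, B f.i f.j⟫ = 0 :=
  h.inner_unit_mul f.inner_unit_i f.inner_i_j

theorem orthonormal_with_k (h : IsUnitalComposition B e) :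
    Orthonormal ℝ ![e, f.i, f.j, B f.i f.j] := by
  simp [Fin.forall_fin_succ, h.norm_unit, f.norm_i, f.norm_j, f.norm_k h, f.inner_unit_i,
    f.inner_unit_j, f.inner_i_j, f.inner_unit_k h, h.inner_left_mul f.inner_unit_j,
    h.inner_right_mul f.inner_unit_i]

/-- The orthonormal basis `e, i, j, k = i j`. -/
noncomputable def orthonormalBasis (h : IsUnitalComposition B e)
    (hdim : finrank ℝ V = 4) : OrthonormalBasis (Fin 4) ℝ V :=
  (basisOfOrthonormalOfCardEqFinrank (f.orthonormal_with_k h)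
    (by rw [hdim, Fintype.card_fin])).toOrthonormalBasis (by
      rw [coe_basisOfOrthonormalOfCardEqFinrank]; exact f.orthonormal_with_k h)

theorem coe_orthonormalBasis (h : IsUnitalComposition B e) (hdim : finrank ℝ V = 4) :
    ⇑(f.orthonormalBasis h hdim) = ![e, f.i, f.j, B f.i f.j] := by
  rw [orthonormalBasis, Basis.coe_toOrthonormalBasis, coe_basisOfOrthonormalOfCardEqFinrank]

/-- The isometry from the quaternions sending `1, i, j, k` to `e, i, j, i j`. -/
noncomputable def isometryEquiv (h : IsUnitalComposition B e) (hdim : finrank ℝ V = 4) :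
    ℍ[ℝ] ≃ₗᵢ[ℝ] V :=
  Quaternion.linearIsometryEquivTuple.trans (f.orthonormalBasis h hdim).repr.symm

theorem isometryEquiv_apply (h : IsUnitalComposition B e) (hdim : finrank ℝ V = 4) (q : ℍ[ℝ]) :
    f.isometryEquiv h hdim q = q.re • e + q.imI • f.i + q.imJ • f.j + q.imK • B f.i f.j := by
  rw [isometryEquiv, LinearIsometryEquiv.trans_apply, ← OrthonormalBasis.sum_repr_symm,
    coe_orthonormalBasis, Fin.sum_univ_four]
  rfl

theorem j_mul_i (h : IsUnitalComposition B e) : B f.j f.i = -B f.i f.j := by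
  rw [h.mul_anticomm f.inner_unit_i f.inner_unit_j f.inner_i_j, neg_neg]

theorem i_mul_k (h : IsUnitalComposition B e) : B f.i (B f.i f.j) = -f.j :=
  h.mul_mul_self_left f.inner_unit_i f.norm_i f.j

theorem k_mul_j (h : IsUnitalComposition B e) : B (B f.i f.j) f.j = -f.i :=
  h.mul_mul_self_right f.inner_unit_j f.norm_j f.i

theorem j_mul_k (h : IsUnitalComposition B e) : B f.j (B f.i f.j) = f.i := by
  rw [← neg_neg (B f.i f.j), ← f.j_mul_i h, map_neg,
    h.mul_mul_self_left f.inner_unit_j f.norm_j, neg_neg]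

theorem k_mul_i (h : IsUnitalComposition B e) : B (B f.i f.j) f.i = f.j := by
  rw [← neg_neg (B f.i f.j), ← f.j_mul_i h, map_neg, LinearMap.neg_apply,
    h.mul_mul_self_right f.inner_unit_i f.norm_i, neg_neg]

theorem isometryEquiv_mul (h : IsUnitalComposition B e) (hdim : finrank ℝ V = 4) (p q : ℍ[ℝ]) :
    f.isometryEquiv h hdim (p * q) = B (f.isometryEquiv h hdim p) (f.isometryEquiv h hdim q) := by
  simp only [isometryEquiv_apply, map_add, map_smul, LinearMap.add_apply, LinearMap.smul_apply,
    h.unit_mul_apply, h.mul_unit_apply, h.mul_self f.inner_unit_i f.norm_i,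
    h.mul_self f.inner_unit_j f.norm_j, h.mul_self (f.inner_unit_k h) (f.norm_k h), f.j_mul_i h,
    f.i_mul_k h, f.k_mul_j h, f.j_mul_k h, f.k_mul_i h, Quaternion.re_mul, Quaternion.imI_mul,
    Quaternion.imJ_mul, Quaternion.imK_mul]
  module

end QuaternionFrame

/-- Kaplansky's trick: for a unit vector `a`, the product `(R_a⁻¹ x)(L_a⁻¹ y)` has the unit `a a`,
where `L_a` and `R_a` are the multiplications by `a` from the left and from the right. -/
theorem IsNormMultiplicative.exists_isotopy_quaternion {V : Type*} [NormedAddCommGroup V]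
    [InnerProductSpace ℝ V] {B : V →ₗ[ℝ] V →ₗ[ℝ] V} (hB : IsNormMultiplicative B)
    (hdim : finrank ℝ V = 4) :
    ∃ (T : V ≃ₗᵢ[ℝ] ℍ[ℝ]) (f g : ℍ[ℝ] ≃ₗᵢ[ℝ] ℍ[ℝ]), ∀ x y, T (B x y) = f (T x) * g (T y) := by
  have : FiniteDimensional ℝ V := Module.finite_of_finrank_pos (by lia)
  have : Nontrivial V := Module.nontrivial_of_finrank_pos (R := ℝ) (by lia)
  obtain ⟨a, ha⟩ := exists_norm_eq V zero_le_one
  let L : V ≃ₗᵢ[ℝ] V := hB.leftIsometryEquiv rfl ha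
  let R : V ≃ₗᵢ[ℝ] V := hB.flip.leftIsometryEquiv rfl ha
  have hL (x : V) : L x = B a x := rfl
  have hR (x : V) : R x = B x a := rfl
  let B' : V →ₗ[ℝ] V →ₗ[ℝ] V := B.compl₁₂ (R.symm.toLinearEquiv : V →ₗ[ℝ] V) L.symm.toLinearEquiv
  have hB' (x y : V) : B' x y = B (R.symm x) (L.symm y) := rfl
  have hunital : IsUnitalComposition B' (B a a) :=
    { isNormMultiplicative := fun x y => by
        rw [hB', hB, LinearIsometryEquiv.norm_map, LinearIsometryEquiv.norm_map]
      norm_unit := by rw [hB, ha, one_mul]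
      unit_mul := LinearMap.ext fun x => by
        rw [hB', ← hR, R.symm_apply_apply, ← hL, L.apply_symm_apply, LinearMap.id_apply]
      mul_unit := LinearMap.ext fun x => by
        rw [LinearMap.flip_apply, hB', ← hL, L.symm_apply_apply, ← hR, R.apply_symm_apply,
          LinearMap.id_apply] }
  obtain ⟨frame⟩ := QuaternionFrame.nonempty_of_norm_eq_one hunital.norm_unit hdim
  let S := frame.isometryEquiv hunital hdim
  refine ⟨S.symm, (S.trans R).trans S.symm, (S.trans L).trans S.symm, fun x y => S.injective ?_⟩
  simp [S, frame.isometryEquiv_mul, hB']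

theorem quaternion_reflection_orthogonal_apply {v : ℍ[ℝ]} (hv : v ≠ 0) (x : ℍ[ℝ]) :
    (ℝ ∙ v)ᗮ.reflection x = -v * star x * (star v)⁻¹ := by
  have hinner : v * star x + x * star v = ((2 * ⟪v, x⟫ : ℝ) : ℍ[ℝ]) := by
    simpa only [star_mul, star_star, Quaternion.inner_def] using
      Quaternion.self_add_star' (v * star x)
  have hinv : (star v)⁻¹ = (‖v‖ ^ 2)⁻¹ • v := by
    rw [Quaternion.inv_def, star_star, Quaternion.normSq_star, Quaternion.normSq_eq_norm_mul_self,
      sq]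
  have hx : x = x * star v * (star v)⁻¹ := by rw [mul_inv_cancel_right₀ (star_ne_zero.2 hv)]
  rw [Submodule.reflection_orthogonal_apply, Submodule.reflection_singleton_apply, neg_sub]
  nth_rw 1 [hx]
  rw [eq_sub_of_add_eq' hinner, sub_mul, neg_mul, neg_mul, Quaternion.coe_mul_eq_smul, hinv]
  simp only [RCLike.ofReal_real_eq_id, id]
  module

theorem quaternion_linearIsometryEquiv_eq_mul_mul (f : ℍ[ℝ] ≃ₗᵢ[ℝ] ℍ[ℝ]) :
    ∃ p q : ℍ[ℝ], p ≠ 0 ∧ q ≠ 0 ∧ ((∀ x, f x = p * x * q) ∨ ∀ x, f x = p * star x * q) := by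
  obtain ⟨vectors, -, rfl⟩ := f.reflections_generate_dim
  induction vectors with
  | nil => exact ⟨1, 1, one_ne_zero, one_ne_zero, .inl fun x => by simp⟩
  | cons v vectors ih =>
    obtain ⟨p, q, hp, hq, h⟩ := ih
    simp only [List.map_cons, List.prod_cons, LinearIsometryEquiv.coe_mul, Function.comp_apply]
    rcases eq_or_ne v 0 with rfl | hv
    · have hid (x : ℍ[ℝ]) : (ℝ ∙ (0 : ℍ[ℝ]))ᗮ.reflection x = x :=
        Submodule.reflection_mem_subspace_eq_self (by simp)
      exact ⟨p, q, hp, hq, by simpa only [hid] using h⟩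
    · refine ⟨-v * star q, star p * (star v)⁻¹, mul_ne_zero (neg_ne_zero.2 hv) (star_ne_zero.2 hq),
        mul_ne_zero (star_ne_zero.2 hp) (inv_ne_zero (star_ne_zero.2 hv)), h.symm.imp ?_ ?_⟩ <;>
      · intro h x
        rw [quaternion_reflection_orthogonal_apply hv, h]
        simp only [star_mul, star_star, mul_assoc]

theorem IsNormMultiplicative.exists_quaternion_normal_form {V : Type*} [NormedAddCommGroup V]
    [InnerProductSpace ℝ V] {B : V →ₗ[ℝ] V →ₗ[ℝ] V} (hB : IsNormMultiplicative B)
    (hdim : finrank ℝ V = 4) :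
    ∃ (e : V ≃ₗ[ℝ] ℍ[ℝ]) (p q : ℍ[ℝ]), p ≠ 0 ∧ q ≠ 0 ∧
      ((∀ x y, e (B x y) = p * e x * e y * q) ∨
        (∀ x y, e (B x y) = p * e x * q * star (e y)) ∨
        (∀ x y, e (B x y) = star (e x) * p * e y * q) ∨
        ∀ x y, e (B x y) = p * star (e x) * star (e y) * q) := by
  obtain ⟨T, f, g, hT⟩ := hB.exists_isotopy_quaternion hdim
  obtain ⟨p, q₁, hp, hq₁, hf⟩ := quaternion_linearIsometryEquiv_eq_mul_mul f
  obtain ⟨q₂, s, hq₂, hs, hg⟩ := quaternion_linearIsometryEquiv_eq_mul_mul g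
  obtain ⟨c, hc, hc0⟩ : ∃ c, q₁ * q₂ = c ∧ c ≠ 0 := ⟨_, rfl, mul_ne_zero hq₁ hq₂⟩
  have hmul {x y : ℍ[ℝ]} : p * x * q₁ * (q₂ * y * s) = p * x * c * y * s := by
    simp only [← hc, mul_assoc]
  -- Replacing `T` by `u T` for a suitable `u` removes one coefficient from `p x c y s`.
  let rescale (u : ℍ[ℝ]) (hu : u ≠ 0) : V ≃ₗ[ℝ] ℍ[ℝ] :=
    T.toLinearEquiv.trans (Units.mulLeftLinearEquiv ℝ ℍ[ℝ] (Units.mk0 u hu))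
  have hrescale {u : ℍ[ℝ]} (hu : u ≠ 0) (x : V) : rescale u hu x = u * T x := rfl
  have hcs : star c ≠ 0 := star_ne_zero.2 hc0
  have hss : star s ≠ 0 := star_ne_zero.2 hs
  rcases hf with hf | hf <;> rcases hg with hg | hg <;> simp only [hf, hg, hmul] at hT
  · exact ⟨rescale c hc0, c * p * c⁻¹, s, by simp [hc0, hp], hs, .inl fun x y => by
      simp only [hrescale, hT, mul_assoc, inv_mul_cancel_left₀ hc0]⟩
  · exact ⟨rescale (star s) hss, star s * p * (star s)⁻¹, c, by simp [hs, hp], hc0,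
      .inr <| .inl fun x y => by
        simp only [hrescale, hT, mul_assoc, inv_mul_cancel_left₀ hss, star_mul, star_star]⟩
  · exact ⟨rescale p⁻¹ (inv_ne_zero hp), star p * c * p, s, by simp [hc0, hp], hs,
      .inr <| .inr <| .inl fun x y => by
        simp only [hrescale, hT, mul_assoc, star_mul, star_inv₀, inv_mul_cancel_left₀ hp,
          mul_inv_cancel_left₀ hp, inv_mul_cancel_left₀ (star_ne_zero.2 hp)]⟩
  · exact ⟨rescale (star c) hcs, star c * p, c⁻¹ * s, by simp [hc0, hp], by simp [hc0, hs],
      .inr <| .inr <| .inr fun x y => by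
        simp only [hrescale, hT, mul_assoc, mul_inv_cancel_left₀ hc0, star_mul, star_star]⟩

section ImaginaryUnits

instance {R : Type*} [CommRing R] [CharZero R] : CharZero ℍ[R] :=
  charZero_of_injective_algebraMap (R := R) Quaternion.coe_injective

variable {q u : ℍ[ℝ]}

theorem quaternion_star_eq_neg_of_mul_self_eq_neg_one (hu : u * u = -1) : star u = -u := by
  have hnormSq : Quaternion.normSq u = 1 := by
    rw [← pow_eq_one_iff_of_nonneg Quaternion.normSq_nonneg two_ne_zero, sq, ← map_mul, hu,
      Quaternion.normSq_neg, map_one]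
  rw [Quaternion.star_eq_neg, ← Quaternion.sq_eq_neg_normSq, hnormSq, sq, hu, Quaternion.coe_one]

theorem quaternion_ne_zero_of_mul_self_eq_neg_one (hu : u * u = -1) : u ≠ 0 := by
  rintro rfl
  simp at hu

theorem quaternion_one_add_ne_zero_of_mul_self_eq_neg_one (hu : u * u = -1) : 1 + u ≠ 0 := by
  intro h
  rw [eq_neg_of_add_eq_zero_right h] at hu
  norm_num [CharZero.eq_neg_self_iff] at hu

theorem quaternion_mem_range_coe_of_commute (h : ∀ u : ℍ[ℝ], u * u = -1 → Commute q u) :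
    q ∈ Set.range ((↑) : ℝ → ℍ[ℝ]) := by
  obtain ⟨i, hi, hi'⟩ : ∃ i : ℍ[ℝ], (i.re = 0 ∧ i.imI = 1) ∧ i.imJ = 0 ∧ i.imK = 0 :=
    ⟨⟨0, 1, 0, 0⟩, ⟨rfl, rfl⟩, rfl, rfl⟩
  obtain ⟨j, hj, hj'⟩ : ∃ j : ℍ[ℝ], (j.re = 0 ∧ j.imI = 0) ∧ j.imJ = 1 ∧ j.imK = 0 :=
    ⟨⟨0, 0, 1, 0⟩, ⟨rfl, rfl⟩, rfl, rfl⟩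
  have hqi : q * i = i * q := h i (by ext <;> simp [hi, hi'])
  have hqj : q * j = j * q := h j (by ext <;> simp [hj, hj'])
  have hI : q.imI = 0 := by simpa [hj, hj', self_eq_neg] using congrArg (·.imK) hqj
  have hJ : q.imJ = 0 := by simpa [hi, hi', neg_eq_self] using congrArg (·.imK) hqi
  have hK : q.imK = 0 := by simpa [hi, hi', self_eq_neg] using congrArg (·.imJ) hqi
  exact ⟨q.re, by ext <;> simp [hI, hJ, hK]⟩

theorem quaternion_exists_mul_self_eq_neg_one_commute (q : ℍ[ℝ]) :
    ∃ u : ℍ[ℝ], u * u = -1 ∧ Commute u q := by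
  obtain ⟨w, hw, hre, hwq⟩ : ∃ w : ℍ[ℝ], w ≠ 0 ∧ w.re = 0 ∧ Commute w q := by
    rcases eq_or_ne q.im 0 with him | him
    · refine ⟨(Complex.I : ℂ), by simp [Quaternion.ext_iff], by simp, ?_⟩
      rw [← q.re_add_im, him, add_zero]
      exact (Quaternion.coe_commute _ _).symm
    · refine ⟨q.im, him, q.re_im, ?_⟩
      nth_rw 2 [← q.re_add_im]
      exact (Quaternion.coe_commute _ _).symm.add_right (.refl _)
  have hnorm : ‖w‖ ≠ 0 := norm_ne_zero_iff.2 hw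
  refine ⟨‖w‖⁻¹ • w, ?_, hwq.smul_left _⟩
  rw [smul_mul_smul_comm, ← sq w, Quaternion.sq_eq_neg_normSq.2 hre,
    Quaternion.normSq_eq_norm_mul_self, smul_neg, Quaternion.smul_coe, ← mul_inv,
    inv_mul_cancel₀ (mul_ne_zero hnorm hnorm), Quaternion.coe_one]

theorem quaternion_eq_zero_of_anticommute (h : ∀ u : ℍ[ℝ], u * u = -1 → q * u = -(u * q)) :
    q = 0 := by
  obtain ⟨u, hu, hcomm⟩ := quaternion_exists_mul_self_eq_neg_one_commute q
  have : u * q = 0 := CharZero.eq_neg_self_iff.1 (hcomm.eq.trans (h u hu))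
  exact (mul_eq_zero.1 this).resolve_left (quaternion_ne_zero_of_mul_self_eq_neg_one hu)

end ImaginaryUnits

/-- The identity `(x², x, x) = 0` for a product `m`. -/
def SqSelfSelfAssoc {X : Type*} (m : X → X → X) : Prop :=
  ∀ x, m (m (m x x) x) x = m (m x x) (m x x)

namespace SqSelfSelfAssoc

theorem congr_equiv {X Y : Type*} {m : X → X → X} {m' : Y → Y → Y} (e : X ≃ Y)
    (he : ∀ x y, e (m x y) = m' (e x) (e y)) : SqSelfSelfAssoc m ↔ SqSelfSelfAssoc m' :=
  e.forall_congr fun x => by rw [← e.apply_eq_iff_eq]; simp only [he]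

theorem mul_of_semigroup {S : Type*} [Semigroup S] : SqSelfSelfAssoc fun x y : S => x * y :=
  fun x => by simp only [mul_assoc]

theorem star_mul_quaternion : SqSelfSelfAssoc fun x y : ℍ[ℝ] => star x * y := fun x => by
  simp only [Quaternion.star_mul_self, Quaternion.star_coe, mul_assoc, star_mul]
  rw [← mul_assoc, ← Quaternion.coe_commutes, mul_assoc, Quaternion.star_mul_self]

variable {p q : ℍ[ℝ]}

theorem mem_range_coe_of_mul_mul_mul (hp : p ≠ 0) (hq : q ≠ 0)
    (h : SqSelfSelfAssoc fun x y => p * x * y * q) :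
    p ∈ Set.range ((↑) : ℝ → ℍ[ℝ]) ∧ q ∈ Set.range ((↑) : ℝ → ℍ[ℝ]) := by
  have hcancel (x : ℍ[ℝ]) : p * (x * x * q * x * q * x) = x * x * q * p * (x * x) * q := by
    refine mul_left_cancel₀ hp (mul_left_cancel₀ hp (mul_right_cancel₀ hq ?_))
    simpa only [mul_assoc] using h x
  have hpq : p * q = q * p := by
    refine mul_right_cancel₀ hq ?_
    simpa only [one_mul, mul_one, mul_assoc] using hcancel 1
  have hq_real : q ∈ Set.range ((↑) : ℝ → ℍ[ℝ]) := by
    refine quaternion_mem_range_coe_of_commute fun u hu => ?_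
    have huqu : u * (q * u) = -q := by
      refine mul_left_cancel₀ hq (mul_left_cancel₀ hp ?_)
      have := hcancel u
      simp only [hu, neg_mul, mul_neg, neg_neg, one_mul, mul_one, ← hpq] at this
      simpa only [mul_assoc, mul_neg, neg_eq_iff_eq_neg] using this
    have := congrArg (u * ·) huqu
    rwa [← mul_assoc, hu, neg_one_mul, mul_neg, neg_inj] at this
  refine ⟨quaternion_mem_range_coe_of_commute fun u hu => ?_, hq_real⟩
  obtain ⟨r, rfl⟩ := hq_real
  have hr : r ≠ 0 := Quaternion.coe_injective.ne_iff.1 hq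
  have hcomm {x : ℍ[ℝ]} (hx : x ≠ 0) : Commute p (x * x) := by
    refine mul_right_cancel₀ (mul_ne_zero hx hx) ?_
    have := hcancel x
    simp only [Quaternion.mul_coe_eq_smul, smul_mul_assoc, mul_smul_comm] at this
    simpa only [mul_assoc] using smul_right_injective _ hr (smul_right_injective _ hr this)
  have hsq : (1 + u) * (1 + u) = (2 : ℝ) • u := by
    rw [add_mul, one_mul, mul_add, mul_one, hu]
    module
  have := hcomm (quaternion_one_add_ne_zero_of_mul_self_eq_neg_one hu)
  rwa [hsq, Commute.smul_right_iff₀ two_ne_zero] at this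

theorem mem_range_coe_of_star_mul_mul_mul (hp : p ≠ 0) (hq : q ≠ 0)
    (h : SqSelfSelfAssoc fun x y => star x * p * y * q) :
    p ∈ Set.range ((↑) : ℝ → ℍ[ℝ]) ∧ q ∈ Set.range ((↑) : ℝ → ℍ[ℝ]) := by
  have hcancel {x : ℍ[ℝ]} (hx : x ≠ 0) :
      star x * p * x * q * p * x = x * p * star x * p * x * q := by
    refine mul_left_cancel₀ (star_ne_zero.2 hp) <| mul_left_cancel₀ (star_ne_zero.2 hx) <|
      mul_left_cancel₀ (star_ne_zero.2 hq) <| mul_right_cancel₀ hq ?_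
    simpa only [mul_assoc, star_mul, star_star] using h x
  have hpq : q * p = p * q := by
    refine mul_left_cancel₀ hp ?_
    simpa only [star_one, one_mul, mul_one, mul_assoc] using hcancel one_ne_zero
  have hq_real : q ∈ Set.range ((↑) : ℝ → ℍ[ℝ]) := by
    refine quaternion_mem_range_coe_of_commute fun u hu => ?_
    have hu0 := quaternion_ne_zero_of_mul_self_eq_neg_one hu
    refine mul_left_cancel₀ hp <| mul_left_cancel₀ hu0 <| mul_left_cancel₀ hp <|
      mul_left_cancel₀ hu0 ?_
    have := hcancel hu0
    simp only [quaternion_star_eq_neg_of_mul_self_eq_neg_one hu, neg_mul, mul_neg, neg_inj] at this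
    rw [mul_assoc _ q p, hpq] at this
    simpa only [mul_assoc] using this
  refine ⟨quaternion_mem_range_coe_of_commute fun u hu => ?_, hq_real⟩
  obtain ⟨r, rfl⟩ := hq_real
  have hr : r ≠ 0 := Quaternion.coe_injective.ne_iff.1 hq
  have hcomm {x : ℍ[ℝ]} (hx : x ≠ 0) : star x * p * x = x * p * star x := by
    refine mul_right_cancel₀ hp (mul_right_cancel₀ hx (smul_right_injective _ hr ?_))
    simpa only [Quaternion.mul_coe_eq_smul, smul_mul_assoc] using hcancel hx
  have := hcomm (quaternion_one_add_ne_zero_of_mul_self_eq_neg_one hu)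
  rw [star_add, star_one, quaternion_star_eq_neg_of_mul_self_eq_neg_one hu] at this
  refine mul_left_cancel₀ (two_ne_zero' ℍ[ℝ]) ?_
  linear_combination (norm := noncomm_ring) this

theorem not_mul_mul_star (hp : p ≠ 0) (hq : q ≠ 0) :
    ¬ SqSelfSelfAssoc fun x y => p * x * q * star y := by
  intro h
  have hcancel (x : ℍ[ℝ]) : p * (x * (q * (star x * (q * (star x * (q * star x)))))) =
      x * (q * (star x * (q * (x * (star q * (star x * star p)))))) := by
    refine mul_left_cancel₀ hp (mul_left_cancel₀ hp ?_)
    simpa only [mul_assoc, star_mul, star_star] using h x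
  have hone : p * (q * (q * q)) = q * (q * (star q * star p)) := by
    simpa only [star_one, one_mul, mul_one] using hcancel 1
  obtain ⟨u, hu, huq⟩ := quaternion_exists_mul_self_eq_neg_one_commute q
  have hstar : star u = -u := quaternion_star_eq_neg_of_mul_self_eq_neg_one hu
  have huq_star : Commute u (star q) := by
    simpa only [hstar, Commute.neg_left_iff] using huq.star_star
  have huu (z : ℍ[ℝ]) : u * (u * z) = -z := by rw [← mul_assoc, hu, neg_one_mul]
  have hneg : -(p * (q * (q * q))) = q * (q * (star q * star p)) := by
    simpa only [hstar, neg_mul, mul_neg, huu, huq.left_comm, huq_star.left_comm, huq.eq, hu,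
      neg_neg, mul_one] using hcancel u
  exact mul_ne_zero hp (mul_ne_zero hq (mul_ne_zero hq hq))
    (CharZero.neg_eq_self_iff.1 (hneg.trans hone.symm))

theorem not_mul_star_mul_star (hp : p ≠ 0) (hq : q ≠ 0) :
    ¬ SqSelfSelfAssoc fun x y => p * star x * star y * q := by
  intro h
  have hcancel {x : ℍ[ℝ]} (hx : x ≠ 0) :
      p * (star x * (star x * (q * (star p * star x)))) =
        x * (star p * (star q * (x * (x * star p)))) := by
    refine mul_left_cancel₀ hx <| mul_left_cancel₀ (star_ne_zero.2 hq) <|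
      mul_left_cancel₀ hp <| mul_right_cancel₀ hq ?_
    simpa only [mul_assoc, star_mul, star_star] using h x
  have hone : p * (q * star p) = star p * (star q * star p) := by
    simpa only [star_one, one_mul, mul_one] using hcancel one_ne_zero
  have hzero : p * (q * star p) = 0 := by
    refine quaternion_eq_zero_of_anticommute fun u hu => ?_
    have huu (z : ℍ[ℝ]) : u * (u * z) = -z := by rw [← mul_assoc, hu, neg_one_mul]
    have := hcancel (quaternion_ne_zero_of_mul_self_eq_neg_one hu)
    simp only [quaternion_star_eq_neg_of_mul_self_eq_neg_one hu, neg_mul, mul_neg, huu, neg_neg,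
      ← hone] at this
    simpa only [mul_assoc] using this
  exact mul_ne_zero hp (mul_ne_zero hq (star_ne_zero.2 hp)) hzero

end SqSelfSelfAssoc

section RescalingIsomorphisms

variable {V : Type*} [AddCommGroup V] [Module ℝ V] {B : V →ₗ[ℝ] V →ₗ[ℝ] V} {e : V ≃ₗ[ℝ] ℍ[ℝ]}
  {p q : ℍ[ℝ]}

theorem SqSelfSelfAssoc.exists_linearEquiv_mul (h : SqSelfSelfAssoc fun x y => B x y)
    (hp : p ≠ 0) (hq : q ≠ 0) (he : ∀ x y, e (B x y) = p * e x * e y * q) :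
    ∃ e' : V ≃ₗ[ℝ] ℍ[ℝ], ∀ x y, e' (B x y) = e' x * e' y := by
  have hnormal := (congr_equiv (m' := fun x y => p * x * y * q) e.toEquiv he).1 h
  obtain ⟨⟨a, rfl⟩, ⟨b, rfl⟩⟩ := hnormal.mem_range_coe_of_mul_mul_mul hp hq
  have hab : a * b ≠ 0 :=
    mul_ne_zero (Quaternion.coe_injective.ne_iff.1 hp) (Quaternion.coe_injective.ne_iff.1 hq)
  refine ⟨e.trans (.smulOfNeZero ℝ ℍ[ℝ] (a * b) hab), fun x y => ?_⟩
  simp [he, Quaternion.coe_mul_eq_smul, Quaternion.mul_coe_eq_smul, smul_smul]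

theorem SqSelfSelfAssoc.exists_linearEquiv_star_mul (h : SqSelfSelfAssoc fun x y => B x y)
    (hp : p ≠ 0) (hq : q ≠ 0) (he : ∀ x y, e (B x y) = star (e x) * p * e y * q) :
    ∃ e' : V ≃ₗ[ℝ] ℍ[ℝ], ∀ x y, e' (B x y) = star (e' x) * e' y := by
  have hnormal := (congr_equiv (m' := fun x y => star x * p * y * q) e.toEquiv he).1 h
  obtain ⟨⟨a, rfl⟩, ⟨b, rfl⟩⟩ := hnormal.mem_range_coe_of_star_mul_mul_mul hp hq
  have hab : a * b ≠ 0 :=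
    mul_ne_zero (Quaternion.coe_injective.ne_iff.1 hp) (Quaternion.coe_injective.ne_iff.1 hq)
  refine ⟨e.trans (.smulOfNeZero ℝ ℍ[ℝ] (a * b) hab), fun x y => ?_⟩
  simp [he, Quaternion.mul_coe_eq_smul, smul_smul]

end RescalingIsomorphisms

/-- A 4-dimensional absolute-valued real algebra satisfies the identity `(x², x, x) = 0`
if and only if it is isomorphic to `ℍ` or to `*ℍ` (product `x ⊙ y = x̄ * y`). -/
theorem stmt_10 {A : Type*} [NormedAddCommGroup A] [NormedSpace ℝ A]
    (mul : A →ₗ[ℝ] A →ₗ[ℝ] A)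
    (habs : ∀ x y : A, ‖mul x y‖ = ‖x‖ * ‖y‖)
    (hdim : Module.finrank ℝ A = 4) :
    (∀ x : A, mul (mul (mul x x) x) x = mul (mul x x) (mul x x))
      ↔ ((∃ e : A ≃ₗ[ℝ] Quaternion ℝ, ∀ x y : A, e (mul x y) = e x * e y) ∨
          (∃ e : A ≃ₗ[ℝ] Quaternion ℝ,
            ∀ x y : A, e (mul x y) = star (e x) * e y)) := by
  have : FiniteDimensional ℝ A := Module.finite_of_finrank_pos (by lia)
  have : Nontrivial A := Module.nontrivial_of_finrank_pos (R := ℝ) (by lia)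
  have hmul : IsNormMultiplicative mul := habs
  let _ : InnerProductSpace ℝ A := InnerProductSpace.ofNorm ℝ (hmul.parallelogram_law rfl)
  refine ⟨fun h : SqSelfSelfAssoc fun x y => mul x y => ?_, ?_⟩
  · obtain ⟨e, p, q, hp, hq, he | he | he | he⟩ := hmul.exists_quaternion_normal_form hdim
    · exact .inl (h.exists_linearEquiv_mul hp hq he)
    · exact (SqSelfSelfAssoc.not_mul_mul_star hp hq
        ((SqSelfSelfAssoc.congr_equiv e.toEquiv he).1 h)).elim
    · exact .inr (h.exists_linearEquiv_star_mul hp hq he)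
    · exact (SqSelfSelfAssoc.not_mul_star_mul_star hp hq
        ((SqSelfSelfAssoc.congr_equiv e.toEquiv he).1 h)).elim
  · rintro (⟨e, he⟩ | ⟨e, he⟩)
    · exact (SqSelfSelfAssoc.congr_equiv e.toEquiv he).2 .mul_of_semigroup
    · exact (SqSelfSelfAssoc.congr_equiv e.toEquiv he).2 .star_mul_quaternion
end

section
/- Let A be a 4-dimensional absolute-valued real algebra. Then A satisfies the identity (x, x², x²) = 0 (i.e. (x x²) x² = x (x² x²) for all x ∈ A, where x² = xx) if and only if A is isomorphic to ℍ, to ℍ*, or to ℍ*(1,i). -/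
/-- The first imaginary unit `i` of the quaternions. -/
def quatI : Quaternion ℝ := ⟨0, 1, 0, 0⟩

/-!
Left and right multiplications by unit vectors are isometries, so the isometry group of a
finite-dimensional absolute-valued algebra is transitive on the unit sphere. The second moment of
the unit ball of the dual is a quadratic form invariant under that group, hence a multiple of
`‖x‖ ^ 2`, and the norm is Euclidean.

By Kaplansky's trick the algebra is isotopic, through isometries, to a unital absolute-valued
algebra, which by Hurwitz's argument is `ℍ` in dimension 4. The isometries of `ℍ` are the maps
`x ↦ p * x * q` and `x ↦ p * star x * q`, so the product of the algebra is `p * σ x * q * τ y * r`,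
where each of `σ`, `τ` is the identity or the conjugation. A change of variable `x ↦ u * x * v`
removes all but two of the parameters.

The remaining parameters are found by evaluating the identity at `1` and at imaginary units. If
`σ` is the conjugation this already leads to a contradiction: a nonzero quaternion would
anticommute with `i`, `j` and `i * j`. For the product `a * x * z * star y` with `z` complex, these
evaluations give `a = z ^ 2` or `a = -z ^ 2` as soon as `z` is not real; evaluating at a square root
of `j` and comparing real parts then leaves only `z = i` and `z = -i`.
-/

/-! ### Norms with a transitive isometry group -/

section Euclidean

open MeasureTheory Measure Module Metric

variable {A B : Type*} [NormedAddCommGroup A] [NormedSpace ℝ A]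
  [NormedAddCommGroup B] [NormedSpace ℝ B]

/-- The second moment of `f ↦ f x` over the unit ball of the dual, a Euclidean quadratic form on
a finite-dimensional `A`. It is taken for the Hausdorff measure: this is an additive Haar measure
which depends on the metric only, so that the form is invariant under linear isometries. -/
noncomputable def dualSecondMoment (x : A) : ℝ :=
  ∫ f in closedBall (0 : StrongDual ℝ A) 1, f x ^ 2 ∂μH[finrank ℝ (StrongDual ℝ A)]

theorem dualSecondMoment_smul (c : ℝ) (x : A) :
    dualSecondMoment (c • x) = c ^ 2 * dualSecondMoment x := by
  simp only [dualSecondMoment, map_smul, smul_eq_mul, mul_pow, integral_const_mul]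

theorem dualSecondMoment_map (g : A ≃ₗᵢ[ℝ] B) (x : A) :
    dualSecondMoment (g x) = dualSecondMoment x := by
  let φ : StrongDual ℝ B ≃ₗᵢ[ℝ] StrongDual ℝ A :=
    ⟨(g.symm.toContinuousLinearEquiv.arrowCongr (.refl ℝ ℝ)).toLinearEquiv,
      fun f => f.opNorm_comp_linearIsometryEquiv g⟩
  have hφ := φ.toIsometryEquiv.measurePreserving_hausdorffMeasure (finrank ℝ (StrongDual ℝ A))
  have hball : φ.toIsometryEquiv ⁻¹' closedBall 0 1 = closedBall 0 1 := by simp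
  rw [dualSecondMoment, dualSecondMoment, φ.toLinearEquiv.finrank_eq,
    ← hφ.setIntegral_preimage_emb φ.toHomeomorph.measurableEmbedding, hball]
  rfl

variable [FiniteDimensional ℝ A]

theorem integrableOn_apply_sq_closedBall (x : A) :
    IntegrableOn (fun f : StrongDual ℝ A => f x ^ 2) (closedBall 0 1)
      μH[finrank ℝ (StrongDual ℝ A)] :=
  have : Continuous fun f : StrongDual ℝ A => f x ^ 2 := by fun_prop
  this.continuousOn.integrableOn_compact (isCompact_closedBall 0 1)

theorem dualSecondMoment_parallelogram (x y : A) :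
    dualSecondMoment (x + y) + dualSecondMoment (x - y) =
      2 * (dualSecondMoment x + dualSecondMoment y) := by
  simp only [dualSecondMoment]
  rw [← integral_add, ← integral_add, ← integral_const_mul]
  · congr 1 with f
    simp only [map_add, map_sub]
    ring
  all_goals exact integrableOn_apply_sq_closedBall _

theorem dualSecondMoment_pos {x : A} (hx : x ≠ 0) : 0 < dualSecondMoment x := by
  let q (f : StrongDual ℝ A) : ℝ := f x ^ 2
  have hopen : IsOpen (Function.support q ∩ ball 0 1) :=
    (show Continuous q by fun_prop).isOpen_support.inter isOpen_ball
  have hne : (Function.support q ∩ ball 0 1).Nonempty := by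
    obtain ⟨f, hf⟩ : ∃ f : StrongDual ℝ A, f x ≠ 0 := SeparatingDual.exists_ne_zero hx
    have hf0 : 0 < ‖f‖ := norm_pos_iff.2 (by rintro rfl; simp at hf)
    refine ⟨(2 * ‖f‖)⁻¹ • f, by simp [q, hf, hf0.ne'], ?_⟩
    rw [mem_ball_zero_iff, norm_smul, norm_inv, norm_mul, norm_norm, Real.norm_two]
    field_simp
    norm_num
  refine (setIntegral_pos_iff_support_of_nonneg_ae (f := q) (.of_forall fun f => sq_nonneg (f x))
    (integrableOn_apply_sq_closedBall x)).2
    ((hopen.measure_pos μH[finrank ℝ (StrongDual ℝ A)] hne).trans_le ?_)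
  exact measure_mono (Set.inter_subset_inter_right _ ball_subset_closedBall)

theorem innerProductSpaceable_of_exists_linearIsometryEquiv
    (h : ∀ x y : A, ‖x‖ = 1 → ‖y‖ = 1 → ∃ g : A ≃ₗᵢ[ℝ] A, g x = y) :
    InnerProductSpaceable A := by
  rcases subsingleton_or_nontrivial A with hA | hA
  · exact ⟨fun x y => by simp [Subsingleton.elim x 0, Subsingleton.elim y 0]⟩
  obtain ⟨c, hc, hnorm⟩ : ∃ c > 0, ∀ x : A, dualSecondMoment x = ‖x‖ ^ 2 * c := by
    obtain ⟨e, he⟩ := exists_norm_eq A zero_le_one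
    refine ⟨dualSecondMoment e, dualSecondMoment_pos (norm_ne_zero_iff.1 (by simp [he])),
      fun x => ?_⟩
    rcases eq_or_ne x 0 with rfl | hx
    · simpa using dualSecondMoment_smul 0 e
    obtain ⟨g, hg⟩ := h e (‖x‖⁻¹ • x) he (norm_smul_inv_norm hx)
    rw [← dualSecondMoment_map g e, hg, ← dualSecondMoment_smul,
      smul_inv_smul₀ (norm_ne_zero_iff.2 hx)]
  refine ⟨fun x y => mul_right_cancel₀ hc.ne' ?_⟩
  have hxy := dualSecondMoment_parallelogram x y
  simp only [hnorm] at hxy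
  linear_combination hxy

end Euclidean

/-! ### Absolute-valued algebras -/

section AbsoluteValued

open Module
open scoped InnerProductSpace Quaternion

variable {A : Type*} [NormedAddCommGroup A]

/-- The bilinear product `mul` makes the normed space `A` an absolute-valued algebra. -/
def IsAbsoluteValued [NormedSpace ℝ A] (mul : A →ₗ[ℝ] A →ₗ[ℝ] A) : Prop :=
  ∀ x y, ‖mul x y‖ = ‖x‖ * ‖y‖

/-- `mul` makes `A` an absolute-valued algebra with unit element `o`. -/
structure IsUnitalAbsoluteValued [NormedSpace ℝ A] (mul : A →ₗ[ℝ] A →ₗ[ℝ] A) (o : A) : Prop where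
  isAbsoluteValued : IsAbsoluteValued mul
  norm_unit : ‖o‖ = 1
  unit_mul : ∀ x, mul o x = x
  mul_unit : ∀ x, mul x o = x

section NormedSpace

variable [NormedSpace ℝ A] {mul : A →ₗ[ℝ] A →ₗ[ℝ] A}

theorem IsAbsoluteValued.flip (h : IsAbsoluteValued mul) : IsAbsoluteValued mul.flip :=
  fun x y => by rw [LinearMap.flip_apply, h, mul_comm]

theorem IsUnitalAbsoluteValued.flip {o : A} (h : IsUnitalAbsoluteValued mul o) :
    IsUnitalAbsoluteValued mul.flip o :=
  ⟨h.isAbsoluteValued.flip, h.norm_unit, h.mul_unit, h.unit_mul⟩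

variable [FiniteDimensional ℝ A]

theorem IsAbsoluteValued.exists_linearIsometryEquiv_mul_left (h : IsAbsoluteValued mul) {a : A}
    (ha : ‖a‖ = 1) : ∃ L : A ≃ₗᵢ[ℝ] A, ∀ x, L x = mul a x :=
  ⟨(⟨mul a, fun x => by rw [h, ha, one_mul]⟩ : A →ₗᵢ[ℝ] A).toLinearIsometryEquiv rfl, fun _ => rfl⟩

theorem IsAbsoluteValued.innerProductSpaceable (h : IsAbsoluteValued mul) :
    InnerProductSpaceable A := by
  refine innerProductSpaceable_of_exists_linearIsometryEquiv fun x y hx hy => ?_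
  obtain ⟨R, hR⟩ := h.flip.exists_linearIsometryEquiv_mul_left hx
  obtain ⟨L, hL⟩ := h.exists_linearIsometryEquiv_mul_left ((R.symm.norm_map y).trans hy)
  exact ⟨L, by rw [hL, ← LinearMap.flip_apply, ← hR, R.apply_symm_apply]⟩

-- Kaplansky's trick: for a unit vector `e`, the product `(R_e⁻¹ x)(L_e⁻¹ y)` has unit `e * e`.
theorem IsAbsoluteValued.exists_unital_isotope [Nontrivial A] (h : IsAbsoluteValued mul) :
    ∃ (n : A →ₗ[ℝ] A →ₗ[ℝ] A) (o : A) (R L : A ≃ₗᵢ[ℝ] A),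
      IsUnitalAbsoluteValued n o ∧ ∀ x y, mul x y = n (R x) (L y) := by
  obtain ⟨e, he⟩ := exists_norm_eq A zero_le_one
  obtain ⟨L, hL⟩ := h.exists_linearIsometryEquiv_mul_left he
  obtain ⟨R, hR⟩ := h.flip.exists_linearIsometryEquiv_mul_left he
  let n : A →ₗ[ℝ] A →ₗ[ℝ] A :=
    mul.compl₁₂ (R.symm.toLinearEquiv : A →ₗ[ℝ] A) (L.symm.toLinearEquiv : A →ₗ[ℝ] A)
  have hn (x y : A) : n x y = mul (R.symm x) (L.symm y) := rfl
  have hRe : R.symm (mul e e) = e := by rw [R.symm_apply_eq, hR, LinearMap.flip_apply]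
  have hLe : L.symm (mul e e) = e := by rw [L.symm_apply_eq, hL]
  refine ⟨n, mul e e, R, L, ⟨fun x y => ?_, ?_, fun x => ?_, fun x => ?_⟩, fun x y => ?_⟩
  · rw [hn, h, R.symm.norm_map, L.symm.norm_map]
  · rw [h, he, one_mul]
  · rw [hn, hRe, ← hL, L.apply_symm_apply]
  · rw [hn, hLe, ← LinearMap.flip_apply, ← hR, R.apply_symm_apply]
  · rw [hn, R.symm_apply_apply, L.symm_apply_apply]

end NormedSpace

section Hurwitz

variable [InnerProductSpace ℝ A] {n : A →ₗ[ℝ] A →ₗ[ℝ] A} {o : A}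

theorem IsAbsoluteValued.inner_mul_mul_left (h : IsAbsoluteValued n) (x y w : A) :
    ⟪n x y, n x w⟫_ℝ = ‖x‖ ^ 2 * ⟪y, w⟫_ℝ := by
  simp only [real_inner_eq_norm_add_mul_self_sub_norm_mul_self_sub_norm_mul_self_div_two,
    ← map_add, h x]
  ring

theorem IsAbsoluteValued.inner_mul_add_inner_mul (h : IsAbsoluteValued n) (x y z w : A) :
    ⟪n x y, n z w⟫_ℝ + ⟪n z y, n x w⟫_ℝ = 2 * ⟪x, z⟫_ℝ * ⟪y, w⟫_ℝ := by
  have hxz := h.inner_mul_mul_left (x + z) y w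
  simp only [map_add, LinearMap.add_apply, inner_add_left, inner_add_right,
    h.inner_mul_mul_left, norm_add_sq_real] at hxz
  linear_combination hxz

/-- The linear map `ℍ → A` sending the basis `1, i, j, k` of `ℍ` to the given vectors. -/
def quaternionFrame (o i j k : A) : ℍ[ℝ] →ₗ[ℝ] A where
  toFun q := q.re • o + q.imI • i + q.imJ • j + q.imK • k
  map_add' p q := by simp only [Quaternion.re_add, Quaternion.imI_add, Quaternion.imJ_add,
    Quaternion.imK_add]; module
  map_smul' c q := by simp only [Quaternion.re_smul, Quaternion.imI_smul, Quaternion.imJ_smul,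
    Quaternion.imK_smul, RingHom.id_apply]; module

theorem quaternionFrame_apply (o i j k : A) (q : ℍ[ℝ]) :
    quaternionFrame o i j k q = q.re • o + q.imI • i + q.imJ • j + q.imK • k := rfl

theorem norm_quaternionFrame {o i j k : A} (h : Orthonormal ℝ ![o, i, j, k]) (q : ℍ[ℝ]) :
    ‖quaternionFrame o i j k q‖ = ‖q‖ := by
  have hsum := h.inner_sum ![q.re, q.imI, q.imJ, q.imK] ![q.re, q.imI, q.imJ, q.imK] Finset.univ
  simp only [Fin.sum_univ_four, Matrix.cons_val, conj_trivial, real_inner_self_eq_norm_sq] at hsum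
  rw [← sq_eq_sq₀ (norm_nonneg _) (norm_nonneg _), quaternionFrame_apply, hsum, sq ‖q‖,
    ← Quaternion.normSq_eq_norm_mul_self, Quaternion.normSq_def']
  ring

namespace IsUnitalAbsoluteValued

theorem inner_mul_left_eq_neg (h : IsUnitalAbsoluteValued n o) {u : A} (hu : ⟪u, o⟫_ℝ = 0)
    (x y : A) : ⟪n u x, y⟫_ℝ = -⟪x, n u y⟫_ℝ := by
  have hpol := h.isAbsoluteValued.inner_mul_add_inner_mul u x o y
  rw [h.unit_mul, h.unit_mul, hu] at hpol
  linear_combination hpol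

theorem mul_mul_self_left (h : IsUnitalAbsoluteValued n o) {u : A} (hu : ⟪u, o⟫_ℝ = 0) (x : A) :
    n u (n u x) = -(‖u‖ ^ 2 • x) := by
  refine ext_inner_right ℝ fun y => ?_
  rw [h.inner_mul_left_eq_neg hu, h.isAbsoluteValued.inner_mul_mul_left, inner_neg_left,
    real_inner_smul_left]

theorem mul_comm_eq_neg (h : IsUnitalAbsoluteValued n o) {u v : A} (hu : ⟪u, o⟫_ℝ = 0)
    (hv : ⟪v, o⟫_ℝ = 0) (huv : ⟪u, v⟫_ℝ = 0) : n v u = -n u v := by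
  have hsq {w : A} (hw : ⟪w, o⟫_ℝ = 0) : n w w = -(‖w‖ ^ 2 • o) := by
    simpa only [h.mul_unit] using h.mul_mul_self_left hw o
  have hadd := hsq (w := u + v) (by rw [inner_add_left, hu, hv, add_zero])
  simp only [map_add, LinearMap.add_apply, hsq hu, hsq hv, norm_add_sq_real, huv] at hadd
  refine eq_neg_of_add_eq_zero_left ?_
  linear_combination (norm := module) hadd

theorem inner_mul_self_left (h : IsUnitalAbsoluteValued n o) (u : A) {v : A}
    (hv : ⟪v, o⟫_ℝ = 0) : ⟪n u v, u⟫_ℝ = 0 := by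
  simpa only [h.mul_unit, hv, mul_zero] using h.isAbsoluteValued.inner_mul_mul_left u v o

theorem inner_mul_unit (h : IsUnitalAbsoluteValued n o) {u v : A} (hu : ⟪u, o⟫_ℝ = 0)
    (huv : ⟪u, v⟫_ℝ = 0) : ⟪n u v, o⟫_ℝ = 0 := by
  rw [h.inner_mul_left_eq_neg hu, h.mul_unit, real_inner_comm, huv, neg_zero]

theorem exists_linearIsometry_quaternion (h : IsUnitalAbsoluteValued n o) {i j : A}
    (hi : ‖i‖ = 1) (hj : ‖j‖ = 1) (hio : ⟪i, o⟫_ℝ = 0) (hjo : ⟪j, o⟫_ℝ = 0)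
    (hij : ⟪i, j⟫_ℝ = 0) : ∃ F : ℍ[ℝ] →ₗᵢ[ℝ] A, ∀ p q, F (p * q) = n (F p) (F q) := by
  obtain ⟨k, hk⟩ : ∃ k, n i j = k := ⟨_, rfl⟩
  have hk1 : ‖k‖ = 1 := by rw [← hk, h.isAbsoluteValued, hi, hj, one_mul]
  have hko : ⟪k, o⟫_ℝ = 0 := hk ▸ h.inner_mul_unit hio hij
  have hki : ⟪k, i⟫_ℝ = 0 := hk ▸ h.inner_mul_self_left i hjo
  have hkj : ⟪k, j⟫_ℝ = 0 := hk ▸ h.flip.inner_mul_self_left j hio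
  have hframe : Orthonormal ℝ ![o, i, j, k] := by
    refine ⟨by simp [Fin.forall_fin_succ, h.norm_unit, hi, hj, hk1], fun a b hab => ?_⟩
    fin_cases a <;> fin_cases b <;> simp_all [real_inner_comm]
  have mul_mul_self {u : A} (hu : ‖u‖ = 1) (huo : ⟪u, o⟫_ℝ = 0) (x : A) : n u (n u x) = -x := by
    rw [h.mul_mul_self_left huo, hu, one_pow, one_smul]
  have mul_self {u : A} (hu : ‖u‖ = 1) (huo : ⟪u, o⟫_ℝ = 0) : n u u = -o := by
    simpa only [h.mul_unit] using mul_mul_self hu huo o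
  have mul_ji : n j i = -k := by rw [h.mul_comm_eq_neg hio hjo hij, hk]
  have mul_ik : n i k = -j := by rw [← hk, mul_mul_self hi hio]
  have mul_jk : n j k = i := by rw [← neg_neg k, ← mul_ji, map_neg, mul_mul_self hj hjo, neg_neg]
  have mul_ki : n k i = j := by rw [← neg_neg j, ← mul_ik, h.mul_comm_eq_neg hko hio hki, neg_neg]
  have mul_kj : n k j = -i := by rw [← mul_jk, h.mul_comm_eq_neg hko hjo hkj, neg_neg]
  refine ⟨⟨quaternionFrame o i j k, norm_quaternionFrame hframe⟩, fun p q => ?_⟩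
  simp only [LinearIsometry.coe_mk, quaternionFrame_apply, map_add, map_smul, LinearMap.add_apply,
    LinearMap.smul_apply, h.unit_mul, h.mul_unit, mul_self hi hio, mul_self hj hjo,
    mul_self hk1 hko, hk, mul_ji, mul_ik, mul_jk, mul_ki, mul_kj, Quaternion.re_mul,
    Quaternion.imI_mul, Quaternion.imJ_mul, Quaternion.imK_mul]
  module

theorem exists_linearIsometryEquiv_quaternion (h : IsUnitalAbsoluteValued n o)
    (hdim : finrank ℝ A = 4) : ∃ F : A ≃ₗᵢ[ℝ] ℍ[ℝ], ∀ x y, F (n x y) = F x * F y := by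
  have : FiniteDimensional ℝ A := .of_finrank_eq_succ hdim
  have : Fact (finrank ℝ A = 3 + 1) := ⟨hdim⟩
  have ho : o ≠ 0 := norm_ne_zero_iff.1 (h.norm_unit ▸ one_ne_zero)
  let b := (stdOrthonormalBasis ℝ (ℝ ∙ o)ᗮ).reindex
    (finCongr (Submodule.finrank_orthogonal_span_singleton (n := 3) ho))
  have hbo (l : Fin 3) : ⟪(b l : A), o⟫_ℝ = 0 :=
    Submodule.mem_orthogonal_singleton_iff_inner_left.1 (b l).2
  obtain ⟨F, hF⟩ := h.exists_linearIsometry_quaternion (i := b 0) (j := b 1) (b.norm_eq_one 0)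
    (b.norm_eq_one 1) (hbo 0) (hbo 1) (b.orthonormal.2 (by decide))
  let F' := F.toLinearIsometryEquiv (Quaternion.finrank_eq_four.trans hdim.symm)
  have hF' (p q : ℍ[ℝ]) : F' (p * q) = n (F' p) (F' q) := hF p q
  refine ⟨F'.symm, fun x y => ?_⟩
  rw [F'.symm_apply_eq, hF', F'.apply_symm_apply, F'.apply_symm_apply]

end IsUnitalAbsoluteValued

end Hurwitz

end AbsoluteValued

/-! ### Isometries of the quaternions -/

section Quaternion

open scoped InnerProductSpace Quaternion

theorem quaternion_ne_zero_of_norm_eq_one {a : ℍ[ℝ]} (ha : ‖a‖ = 1) : a ≠ 0 :=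
  norm_ne_zero_iff.1 (ha ▸ one_ne_zero)

theorem quaternion_star_eq_inv {a : ℍ[ℝ]} (ha : ‖a‖ = 1) : star a = a⁻¹ := by
  refine eq_inv_of_mul_eq_one_left ?_
  rw [Quaternion.star_mul_self, Quaternion.normSq_eq_norm_mul_self, ha, mul_one, Quaternion.coe_one]

theorem reflection_orthogonal_span_singleton_quaternion {v : ℍ[ℝ]} (hv : ‖v‖ = 1) (x : ℍ[ℝ]) :
    (ℝ ∙ v)ᗮ.reflection x = -v * star x * v := by
  have hinner : ((2 * ⟪v, x⟫_ℝ : ℝ) : ℍ[ℝ]) = v * star x + x * star v := by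
    have h := Quaternion.self_add_star' (v * star x)
    rwa [star_mul, star_star, eq_comm] at h
  rw [Submodule.reflection_orthogonal_apply, Submodule.reflection_singleton_apply, hv,
    RCLike.ofReal_one, one_pow, div_one, ← Nat.cast_smul_eq_nsmul ℝ, smul_smul, Nat.cast_ofNat,
    ← Quaternion.coe_mul_eq_smul, hinner, quaternion_star_eq_inv hv, add_mul,
    inv_mul_cancel_right₀ (quaternion_ne_zero_of_norm_eq_one hv)]
  noncomm_ring

theorem exists_linearIsometryEquiv_quaternion_eq (f : ℍ[ℝ] ≃ₗᵢ[ℝ] ℍ[ℝ]) :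
    ∃ p q : ℍ[ℝ], ‖p‖ = 1 ∧ ‖q‖ = 1 ∧
      ((∀ x, f x = p * x * q) ∨ (∀ x, f x = p * star x * q)) := by
  obtain ⟨l, -, rfl⟩ := f.reflections_generate_dim
  induction l with
  | nil => exact ⟨1, 1, by simp, by simp, .inl fun x => by simp⟩
  | cons v l ih =>
    obtain ⟨p, q, hp, hq, h⟩ := ih
    simp only [List.map_cons, List.prod_cons, LinearIsometryEquiv.coe_mul, Function.comp_apply]
    rcases eq_or_ne v 0 with rfl | hv
    · exact ⟨p, q, hp, hq, by
        simpa [Submodule.reflection_mem_subspace_eq_self Submodule.mem_top] using h⟩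
    obtain ⟨w, hw, hvw⟩ : ∃ w : ℍ[ℝ], ‖w‖ = 1 ∧ (ℝ ∙ v) = ℝ ∙ w :=
      ⟨‖v‖⁻¹ • v, norm_smul_inv_norm hv,
        (Submodule.span_singleton_smul_eq (by simpa using hv) v).symm⟩
    refine ⟨-w * star q, star p * w, by simp [hw, hq], by simp [hw, hp], ?_⟩
    simp only [hvw, reflection_orthogonal_span_singleton_quaternion hw]
    rcases h with h | h
    · exact .inr fun x => by simp [h, mul_assoc]
    · exact .inl fun x => by simp [h, mul_assoc]

end Quaternion

/-! ### Complex numbers in the quaternions -/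

section QuaternionComplex

open scoped Quaternion

/-- The second imaginary unit `j` of the quaternions, companion of `quatI`. -/
@[simps]
def quatJ : ℍ[ℝ] := ⟨0, 0, 1, 0⟩

theorem quatI_eq_coeComplex : quatI = (Complex.I : ℂ) := rfl

theorem quatI_mul_self : quatI * quatI = -1 := by
  ext <;> simp [quatI_eq_coeComplex]

theorem quatJ_mul_self : quatJ * quatJ = -1 := by
  ext <;> simp

theorem quatI_mul_coeComplex (z : ℂ) : quatI * (z : ℍ[ℝ]) = z * quatI := by
  rw [quatI_eq_coeComplex, ← Quaternion.coeComplex_mul, mul_comm, Quaternion.coeComplex_mul]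

theorem coeComplex_mul_quatJ (z : ℂ) : (z : ℍ[ℝ]) * quatJ = quatJ * star (z : ℍ[ℝ]) := by
  ext <;> simp

theorem norm_eq_one_of_mul_self_eq_neg_one {u : ℍ[ℝ]} (hu : u * u = -1) : ‖u‖ = 1 := by
  have h : ‖u‖ * ‖u‖ = 1 := by rw [← norm_mul, hu, norm_neg, norm_one]
  nlinarith [norm_nonneg u]

theorem star_eq_neg_of_mul_self_eq_neg_one {u : ℍ[ℝ]} (hu : u * u = -1) : star u = -u := by
  rw [quaternion_star_eq_inv (norm_eq_one_of_mul_self_eq_neg_one hu)]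
  exact inv_eq_of_mul_eq_one_left (by rw [neg_mul, hu, neg_neg])

theorem star_quatI : star quatI = -quatI :=
  star_eq_neg_of_mul_self_eq_neg_one quatI_mul_self

-- For `a = t + u` with `u` imaginary, `w = ‖u‖ - i * u` satisfies `w * u = ‖u‖ * i * w`, and `w`
-- vanishes only if `u` is already a multiple of `i`.
theorem exists_ne_zero_mul_eq_coeComplex_mul (a : ℍ[ℝ]) :
    ∃ w : ℍ[ℝ], w ≠ 0 ∧ ∃ z : ℂ, w * a = z * w := by
  obtain ⟨u, hu⟩ : ∃ u, a.im = u := ⟨_, rfl⟩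
  obtain ⟨r, hr⟩ : ∃ r, ‖u‖ = r := ⟨_, rfl⟩
  have huu : u * u = -(r * r) := by
    rw [← hu, ← sq, Quaternion.im_sq, Quaternion.normSq_eq_norm_mul_self, hu, hr,
      Quaternion.coe_mul]
  have ha : a = a.re + u := hu ▸ a.re_add_im.symm
  by_cases hw : r - quatI * u = 0
  · refine ⟨1, one_ne_zero, ⟨a.re, a.imI⟩, ?_⟩
    have hK : a.imK = 0 := by simpa [quatI_eq_coeComplex, ← hu] using congrArg (·.imJ) hw
    have hJ : a.imJ = 0 := by simpa [quatI_eq_coeComplex, ← hu] using congrArg (·.imK) hw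
    ext <;> simp [hJ, hK]
  · refine ⟨r - quatI * u, hw, ⟨a.re, r⟩, ?_⟩
    have hz : ((⟨a.re, r⟩ : ℂ) : ℍ[ℝ]) = a.re + r * quatI := by
      ext <;> simp [quatI_eq_coeComplex]
    have hwu : (r - quatI * u) * u = r * quatI * (r - quatI * u) := by
      have hrI : (r : ℍ[ℝ]) * quatI = quatI * r := Quaternion.coe_commutes r quatI
      have hII : quatI * (quatI * u) = -u := by rw [← mul_assoc, quatI_mul_self, neg_one_mul]
      rw [mul_sub, sub_mul, mul_assoc, huu, mul_assoc _ quatI (_ * _), hII, hrI, mul_assoc]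
      noncomm_ring
    rw [hz, add_mul, ← hwu, Quaternion.coe_commutes, ← mul_add, ← ha]

theorem exists_conj_eq_coeComplex (a : ℍ[ℝ]) :
    ∃ v : ℍ[ℝ], ‖v‖ = 1 ∧ ∃ z : ℂ, v * a * star v = z := by
  obtain ⟨w, hw, z, hwz⟩ := exists_ne_zero_mul_eq_coeComplex_mul a
  have hv : ‖(‖w‖⁻¹ • w : ℍ[ℝ])‖ = 1 := norm_smul_inv_norm hw
  refine ⟨‖w‖⁻¹ • w, hv, z, ?_⟩
  rw [quaternion_star_eq_inv hv, smul_mul_assoc, hwz, ← mul_smul_comm,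
    mul_inv_cancel_right₀ (quaternion_ne_zero_of_norm_eq_one hv)]

theorem eq_zero_of_mul_eq_neg_mul {R : Type*} [Ring R] [NoZeroDivisors R] [IsAddTorsionFree R]
    {u v w : R} (hu : u ≠ 0) (hv : v ≠ 0) (hwu : w * u = -(u * w)) (hwv : w * v = -(v * w))
    (hwuv : w * (u * v) = -(u * v * w)) : w = 0 := by
  have h : u * v * w = -(u * v * w) := by
    rw [← hwuv, ← mul_assoc, hwu, neg_mul, mul_assoc, mul_assoc, hwv, mul_neg, neg_neg]
  exact (mul_eq_zero.1 (self_eq_neg.1 h)).resolve_left (mul_ne_zero hu hv)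

theorem quaternion_eq_zero_of_mul_eq_neg_mul {w : ℍ[ℝ]} (hI : w * quatI = -(quatI * w))
    (hJ : w * quatJ = -(quatJ * w)) (hK : w * (quatI * quatJ) = -(quatI * quatJ * w)) : w = 0 := by
  have : IsAddTorsionFree ℍ[ℝ] := .of_module_rat _
  have ne_zero {u : ℍ[ℝ]} (hu : u * u = -1) : u ≠ 0 :=
    quaternion_ne_zero_of_norm_eq_one (norm_eq_one_of_mul_self_eq_neg_one hu)
  exact eq_zero_of_mul_eq_neg_mul (ne_zero quatI_mul_self) (ne_zero quatJ_mul_self) hI hJ hK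

theorem quatI_mul_quatJ_mul_self : quatI * quatJ * (quatI * quatJ) = -1 := by
  have hJI : quatJ * quatI = -(quatI * quatJ) := by
    ext <;> simp [quatI_eq_coeComplex]
  rw [mul_assoc, ← mul_assoc quatJ, hJI, neg_mul, mul_assoc, quatJ_mul_self, mul_neg_one, neg_neg,
    quatI_mul_self]

theorem eq_one_or_eq_neg_one_of_forall_commute {a : ℍ[ℝ]} (ha : ‖a‖ = 1)
    (h : ∀ u : ℍ[ℝ], u * u = -1 → a * u = u * a) : a = 1 ∨ a = -1 := by
  have hI := h quatI quatI_mul_self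
  have hJ := h quatJ quatJ_mul_self
  have ha_re : a = a.re := by
    have h_imK : a.imK = 0 := by
      simpa [quatI_eq_coeComplex, self_eq_neg] using congrArg (·.imJ) hI
    have h_imJ : a.imJ = 0 := by
      simpa [quatI_eq_coeComplex, neg_eq_self] using congrArg (·.imK) hI
    have h_imI : a.imI = 0 := by
      simpa [self_eq_neg] using congrArg (·.imK) hJ
    ext <;> simp [h_imI, h_imJ, h_imK]
  rw [ha_re, Quaternion.norm_coe, Real.norm_eq_abs, abs_eq zero_le_one] at ha
  rw [ha_re]
  exact ha.imp (by simp +contextual) (by simp +contextual)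

theorem norm_coeComplex (z : ℂ) : ‖(z : ℍ[ℝ])‖ = ‖z‖ := by
  rw [← sq_eq_sq₀ (norm_nonneg _) (norm_nonneg _), sq ‖(z : ℍ[ℝ])‖,
    ← Quaternion.normSq_eq_norm_mul_self, Quaternion.normSq_def', Complex.sq_norm,
    Complex.normSq_apply]
  simp [sq]

theorem coeComplex_injective : Function.Injective ((↑) : ℂ → ℍ[ℝ]) := fun _ _ h =>
  Complex.ext (congrArg (·.re) h) (congrArg (·.imI) h)

theorem coeComplex_pow (z : ℂ) (n : ℕ) : ((z ^ n : ℂ) : ℍ[ℝ]) = (z : ℍ[ℝ]) ^ n :=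
  map_pow Quaternion.ofComplex z n

theorem coeComplex_eq_or_eq_neg {z w : ℂ} (h : z = w ∨ z = -w) :
    (z : ℍ[ℝ]) = w ∨ (z : ℍ[ℝ]) = -w :=
  h.imp (congrArg _) fun h => (congrArg _ h).trans (map_neg Quaternion.ofComplex w)

theorem eq_coeComplex_of_commute {a : ℍ[ℝ]} {z : ℂ} (hz : z.im ≠ 0) (h : a * z = z * a) :
    ∃ w : ℂ, a = w := by
  have h_imJ : a.imJ * z.re + a.imK * z.im = z.re * a.imJ - z.im * a.imK := by
    simpa using congrArg (·.imJ) h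
  have h_imK : -(a.imJ * z.im) + a.imK * z.re = z.re * a.imK + z.im * a.imJ := by
    simpa using congrArg (·.imK) h
  have hJ : a.imJ = 0 := by grind
  have hK : a.imK = 0 := by grind
  exact ⟨⟨a.re, a.imI⟩, by ext <;> simp [hJ, hK]⟩

-- `y = (1 + j) / √2` is a square root of `j`: conjugation by `y` takes `k` to `i` and `i` to `-k`.
theorem exists_mul_eq_coeComplex_mul (z : ℂ) :
    ∃ y : ℍ[ℝ], ‖y‖ = 1 ∧ y * (z.re + z.im * (quatI * quatJ)) = z * y ∧
      y * z = star (z.re + z.im * (quatI * quatJ) : ℍ[ℝ]) * y := by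
  have hj : 1 + quatJ ≠ 0 := fun h => by simpa using congrArg (·.re) h
  refine ⟨‖1 + quatJ‖⁻¹ • (1 + quatJ), norm_smul_inv_norm hj, ?_, ?_⟩
  · rw [smul_mul_assoc, mul_smul_comm]
    congr 1
    ext <;> simp [quatI_eq_coeComplex]
  · rw [smul_mul_assoc, mul_smul_comm]
    congr 1
    ext <;> simp [quatI_eq_coeComplex]

theorem quaternion_re_mul_comm (p q : ℍ[ℝ]) : (p * q).re = (q * p).re := by
  simp only [Quaternion.re_mul]
  ring

theorem quaternion_re_eq_of_mul_eq_mul {b k : ℍ[ℝ]} (hk : k ≠ 0)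
    (h : b * b * k⁻¹ * b * k * b = k⁻¹ * k⁻¹ * k⁻¹ * b⁻¹ * k * b * k * k) :
    (b * b * b * (k⁻¹ * b * k)).re = (k⁻¹ * b⁻¹ * k * b).re :=
  calc (b * b * b * (k⁻¹ * b * k)).re = (b * b * k⁻¹ * b * k * b).re := by
        rw [quaternion_re_mul_comm _ b]
        simp only [mul_assoc]
    _ = (k⁻¹ * k⁻¹ * (k⁻¹ * b⁻¹ * k * b) * (k * k)).re := by
        rw [h]
        simp only [mul_assoc]
    _ = (k⁻¹ * b⁻¹ * k * b).re := by
        rw [quaternion_re_mul_comm]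
        simp [mul_assoc, hk]

end QuaternionComplex

/-! ### The identity in the normal forms -/

section Identity

open scoped Quaternion ComplexConjugate

/-- The product `m` satisfies the identity `(x, x², x²) = 0`. -/
def IsAssocSelfSqSq {A : Type*} (m : A → A → A) : Prop :=
  ∀ x, m (m x (m x x)) (m x x) = m x (m (m x x) (m x x))

variable {a b : ℍ[ℝ]}

theorem IsAssocSelfSqSq.mul_mul_mul_cases (ha : ‖a‖ = 1) (hb : ‖b‖ = 1)
    (h : IsAssocSelfSqSq fun x y => a * x * y * b) : (a = 1 ∨ a = -1) ∧ (b = 1 ∨ b = -1) := by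
  have ha0 := quaternion_ne_zero_of_norm_eq_one ha
  have hb0 := quaternion_ne_zero_of_norm_eq_one hb
  have hba : b * a = a * b := by
    have h_one : a * a * a * b * (b * a) * (b * b) = a * a * a * b * (a * b) * (b * b) := by
      simpa [mul_assoc] using h 1
    simpa [ha0, hb0] using h_one
  have ha_cases : a = 1 ∨ a = -1 := by
    refine eq_one_or_eq_neg_one_of_forall_commute ha fun u hu => ?_
    have huu (x : ℍ[ℝ]) : u * (u * x) = -x := by rw [← mul_assoc, hu, neg_one_mul]
    have hba' (x : ℍ[ℝ]) : b * (a * x) = a * (b * x) := by rw [← mul_assoc, hba, mul_assoc]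
    have h_u : a * (a * u) * (a * a * b ^ 4) = a * (u * a) * (a * a * b ^ 4) := by
      simpa [mul_assoc, huu, hba, hba', pow_succ] using h u
    simpa [ha0, hb0] using h_u
  refine ⟨ha_cases, eq_one_or_eq_neg_one_of_forall_commute hb fun u hu => ?_⟩
  have hb_sq (x : ℍ[ℝ]) : b * (x * x) = x * x * b := by
    rcases eq_or_ne x 0 with rfl | hx0
    · simp
    have h_x : x * x * x * b * (b * (x * x)) * (b * b) =
        x * x * x * b * (x * x * b) * (b * b) := by
      rcases ha_cases with rfl | rfl <;> simpa [mul_assoc] using h x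
    simpa [hx0, hb0] using h_x
  have hu_sq : (1 + u) * (1 + u) = u + u := by
    linear_combination (norm := noncomm_ring) hu
  have h_two : (2 : ℝ) • (b * u) = (2 : ℝ) • (u * b) := by
    simpa only [hu_sq, mul_add, add_mul, two_smul] using hb_sq (1 + u)
  exact smul_right_injective _ two_ne_zero h_two

theorem IsAssocSelfSqSq.false_of_star_mul_star (ha : ‖a‖ = 1) (hb : ‖b‖ = 1)
    (h : IsAssocSelfSqSq fun x y => a * star x * star y * b) : False := by
  have ha0 := quaternion_ne_zero_of_norm_eq_one ha
  have hb0 := quaternion_ne_zero_of_norm_eq_one hb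
  have hsa := quaternion_star_eq_inv ha
  have hsb := quaternion_star_eq_inv hb
  have h_one : a⁻¹ * b⁻¹ = a * b := by
    have h_one : a * b⁻¹ * a * b * (a⁻¹ * b⁻¹) * (a⁻¹ * b) =
        a * b⁻¹ * a * b * (a * b) * (a⁻¹ * b) := by
      simpa [mul_assoc, hsa, hsb] using h 1
    simpa [ha0, hb0] using h_one
  have h_imag (u : ℍ[ℝ]) (hu : u * u = -1) : b⁻¹ * a * b * u = -(u * (b⁻¹ * a * b)) := by
    have hsu := star_eq_neg_of_mul_self_eq_neg_one hu
    have huu (x : ℍ[ℝ]) : u * (u * x) = -x := by rw [← mul_assoc, hu, neg_one_mul]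
    have h_u : a * (b⁻¹ * a * b * u) * (a⁻¹ * b⁻¹ * a⁻¹ * b) =
        a * -(u * (b⁻¹ * a * b)) * (a * b * a⁻¹ * b) := by
      simpa [mul_assoc, hsa, hsb, hsu, huu] using h u
    rw [h_one] at h_u
    exact mul_left_cancel₀ ha0 (mul_right_cancel₀ (by simp [ha0, hb0]) h_u)
  have h_zero : b⁻¹ * a * b = 0 := quaternion_eq_zero_of_mul_eq_neg_mul
    (h_imag _ quatI_mul_self) (h_imag _ quatJ_mul_self) (h_imag _ quatI_mul_quatJ_mul_self)
  simp [ha0, hb0] at h_zero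

theorem IsAssocSelfSqSq.false_of_star_mul {z : ℂ} (hz : ‖z‖ = 1) (hb : ‖b‖ = 1)
    (h : IsAssocSelfSqSq fun x y => star x * z * y * b) : False := by
  rw [← norm_coeComplex] at hz
  obtain ⟨a, ha⟩ : ∃ a : ℍ[ℝ], (z : ℍ[ℝ]) = a := ⟨_, rfl⟩
  simp only [ha] at hz h
  have ha0 := quaternion_ne_zero_of_norm_eq_one hz
  have hb0 := quaternion_ne_zero_of_norm_eq_one hb
  have hsa := quaternion_star_eq_inv hz
  have hsb := quaternion_star_eq_inv hb
  have h_one : a * b⁻¹ * a * b = b⁻¹ * b⁻¹ := by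
    have h_one : b⁻¹ * b⁻¹ * (b * b) = a * b⁻¹ * a * b * (b * b) := by
      simpa [mul_assoc, hsa, hsb, ha0, hb0] using h 1
    exact (mul_right_cancel₀ (by simp [hb0]) h_one).symm
  have h_imag {u : ℍ[ℝ]} (hu : u * u = -1) (hua : a * u = u * a ∨ a * u = u * a⁻¹) :
      b⁻¹ * b⁻¹ * u = -(u * (b⁻¹ * b⁻¹)) := by
    have hsu := star_eq_neg_of_mul_self_eq_neg_one hu
    have huu (x : ℍ[ℝ]) : u * (u * x) = -x := by rw [← mul_assoc, hu, neg_one_mul]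
    have h_u : b⁻¹ * b⁻¹ * u * (b * b) = -(u * (a * b⁻¹ * a * b)) * (b * b) := by
      have h_u := h u
      rcases hua with hua | hua
      · have hua' (x : ℍ[ℝ]) : u * (a * x) = a * (u * x) := by rw [← mul_assoc, ← hua, mul_assoc]
        simpa [mul_assoc, hsa, hsb, hsu, huu, hua', ha0, hb0] using h_u
      · have hua' (x : ℍ[ℝ]) : a * (u * x) = u * (a⁻¹ * x) := by rw [← mul_assoc, hua, mul_assoc]
        simpa [mul_assoc, hsa, hsb, hsu, huu, hua', ha0, hb0] using h_u
    rw [h_one] at h_u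
    exact mul_right_cancel₀ (by simp [hb0]) h_u
  have hI : a * quatI = quatI * a := by rw [← ha, quatI_mul_coeComplex]
  have hJ : a * quatJ = quatJ * a⁻¹ := by
    rw [← hsa, ← ha, coeComplex_mul_quatJ]
  have hIJ : a * (quatI * quatJ) = quatI * quatJ * a⁻¹ := by
    rw [← mul_assoc, hI, mul_assoc, hJ, mul_assoc]
  have h_zero : b⁻¹ * b⁻¹ = 0 := quaternion_eq_zero_of_mul_eq_neg_mul
    (h_imag quatI_mul_self (.inl hI)) (h_imag quatJ_mul_self (.inr hJ))
    (h_imag quatI_mul_quatJ_mul_self (.inr hIJ))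
  simp [hb0] at h_zero

theorem IsAssocSelfSqSq.commute_of_mul_mul_star (ha : ‖a‖ = 1) (hb : ‖b‖ = 1)
    (h : IsAssocSelfSqSq fun x y => a * x * b * star y) : a * b = b * a := by
  have ha0 := quaternion_ne_zero_of_norm_eq_one ha
  have hb0 := quaternion_ne_zero_of_norm_eq_one hb
  have h_one : 1 = a * (b * a) * b⁻¹ * (a⁻¹ * a⁻¹) := by
    simpa [mul_assoc, quaternion_star_eq_inv ha, quaternion_star_eq_inv hb, ha0, hb0] using h 1
  have h_mul : a * (a * b) = a * (b * a) := by
    simpa [mul_assoc, ha0, hb0] using congrArg (· * (a * a * b)) h_one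
  exact mul_left_cancel₀ ha0 h_mul

theorem IsAssocSelfSqSq.eq_one_or_eq_neg_one_of_mul_mul_star (ha : ‖a‖ = 1) (hb : b = 1 ∨ b = -1)
    (h : IsAssocSelfSqSq fun x y => a * x * b * star y) : a = 1 ∨ a = -1 := by
  have ha0 := quaternion_ne_zero_of_norm_eq_one ha
  refine eq_one_or_eq_neg_one_of_forall_commute ha fun u hu => ?_
  have hu0 := quaternion_ne_zero_of_norm_eq_one (norm_eq_one_of_mul_self_eq_neg_one hu)
  have hsu := quaternion_star_eq_inv (norm_eq_one_of_mul_self_eq_neg_one hu)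
  have h_u : a * (a * u) * (a⁻¹ * a⁻¹) = a * (u * a) * (a⁻¹ * a⁻¹) := by
    rcases hb with rfl | rfl <;>
      simpa [mul_assoc, quaternion_star_eq_inv ha, hsu, ha0, hu0] using h u
  simpa [ha0] using h_u

theorem IsAssocSelfSqSq.sq_eq_pow_four_of_mul_mul_star {w z : ℂ} (hw : ‖w‖ = 1) (hz : ‖z‖ = 1)
    (h : IsAssocSelfSqSq fun x y => (w * x * z * star y : ℍ[ℝ])) : w ^ 2 = z ^ 4 := by
  have hw0 : w ≠ 0 := norm_ne_zero_iff.1 (hw ▸ one_ne_zero)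
  have hz0 : z ≠ 0 := norm_ne_zero_iff.1 (hz ▸ one_ne_zero)
  have mul_jj : (w : ℍ[ℝ]) * quatJ * z * star quatJ = (w * conj z : ℂ) := by
    ext <;> simp
  have mul_complex (p s : ℂ) : (w : ℍ[ℝ]) * p * z * star (s : ℍ[ℝ]) = (w * p * z * conj s : ℂ) := by
    ext <;> simp
  have mul_complex_j (p s : ℂ) : (w : ℍ[ℝ]) * (p * quatJ) * z * star (s : ℍ[ℝ]) =
      (w * p * conj z * s : ℂ) * quatJ := by
    ext <;> simp
    all_goals ring
  have mul_j_complex (s : ℂ) :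
      (w : ℍ[ℝ]) * quatJ * z * star (s : ℍ[ℝ]) = (w * conj z * s : ℂ) * quatJ := by
    simpa using mul_complex_j 1 s
  have h_j := h quatJ
  simp only [mul_jj, mul_complex, mul_j_complex, mul_complex_j] at h_j
  have h_eq := coeComplex_injective (mul_right_cancel₀ (quaternion_ne_zero_of_norm_eq_one
    (norm_eq_one_of_mul_self_eq_neg_one quatJ_mul_self)) h_j)
  rw [map_mul, Complex.conj_conj, ← Complex.inv_eq_conj hw, ← Complex.inv_eq_conj hz] at h_eq
  field_simp at h_eq
  exact h_eq

theorem IsAssocSelfSqSq.mul_eq_mul_of_mul_mul_star {k y : ℍ[ℝ]} (hb : ‖b‖ = 1) (hk : ‖k‖ = 1)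
    (hy : ‖y‖ = 1) (hyk : y * k = b * y) (hyb : y * b = star k * y) (hab : a = b ^ 2 ∨ a = -b ^ 2)
    (h : IsAssocSelfSqSq fun x y => a * x * b * star y) :
    b * b * k⁻¹ * b * k * b = k⁻¹ * k⁻¹ * k⁻¹ * b⁻¹ * k * b * k * k := by
  have hb0 := quaternion_ne_zero_of_norm_eq_one hb
  have hk0 := quaternion_ne_zero_of_norm_eq_one hk
  have hy0 := quaternion_ne_zero_of_norm_eq_one hy
  have hsb := quaternion_star_eq_inv hb
  have hsk := quaternion_star_eq_inv hk
  have hsy := quaternion_star_eq_inv hy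
  have mul_k (x) : y * (k * x) = b * (y * x) := by rw [← mul_assoc, hyk, mul_assoc]
  have mul_b (x) : y * (b * x) = k⁻¹ * (y * x) := by rw [← mul_assoc, hyb, mul_assoc, hsk]
  have mul_k_inv (x) : y * (k⁻¹ * x) = b⁻¹ * (y * x) := by
    rw [eq_inv_mul_iff_mul_eq₀ hb0, ← mul_k, mul_inv_cancel_left₀ hk0]
  have mul_b_inv (x) : y * (b⁻¹ * x) = k * (y * x) := by
    rw [← inv_inv k, eq_inv_mul_iff_mul_eq₀ (inv_ne_zero hk0), ← mul_b, mul_inv_cancel_left₀ hb0]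
  have h_y : b * b * k⁻¹ * b * k * b * (k * y * b⁻¹) =
      k⁻¹ * k⁻¹ * k⁻¹ * b⁻¹ * k * b * k * k * (k * y * b⁻¹) := by
    rcases hab with rfl | rfl <;>
      simpa [mul_assoc, hsb, hsk, hsy, mul_k, mul_b, mul_k_inv, mul_b_inv, hy0, hb0, hk0, sq]
        using h y
  exact mul_right_cancel₀ (by simp [hy0, hb0, hk0]) h_y

theorem IsAssocSelfSqSq.re_eq_zero_of_mul_mul_star {z : ℂ} (hz : ‖z‖ = 1) (hz_im : z.im ≠ 0)
    (haz : a = z ^ 2 ∨ a = -z ^ 2)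
    (h : IsAssocSelfSqSq fun x y => a * x * z * star y) : z.re = 0 := by
  have hz_sq : z.re ^ 2 + z.im ^ 2 = 1 := by
    rw [sq, sq, ← Complex.normSq_apply, ← Complex.sq_norm, hz, one_pow]
  have hb : ‖(z : ℍ[ℝ])‖ = 1 := (norm_coeComplex z).trans hz
  obtain ⟨y, hy, hyk, hyb⟩ := exists_mul_eq_coeComplex_mul z
  obtain ⟨k, hk⟩ : ∃ k : ℍ[ℝ], z.re + z.im * (quatI * quatJ) = k := ⟨_, rfl⟩
  rw [hk] at hyk hyb
  have hk1 : ‖k‖ = 1 := by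
    have h_norm := congrArg norm hyk
    rwa [norm_mul, norm_mul, hy, hb, one_mul, one_mul] at h_norm
  have h_re := quaternion_re_eq_of_mul_eq_mul (quaternion_ne_zero_of_norm_eq_one hk1)
    (h.mul_eq_mul_of_mul_mul_star hb hk1 hy hyk hyb haz)
  rw [← quaternion_star_eq_inv hk1, ← quaternion_star_eq_inv hb] at h_re
  have re_left : (z * z * z * (star k * z * k) : ℍ[ℝ]).re =
      z.re ^ 6 - 5 * z.re ^ 4 * z.im ^ 2 + z.re ^ 2 * z.im ^ 4 - z.im ^ 6 := by
    simp [← hk, quatI_eq_coeComplex]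
    ring
  have re_right : (star k * star (z : ℍ[ℝ]) * k * z).re =
      z.re ^ 4 + 2 * z.re ^ 2 * z.im ^ 2 - z.im ^ 4 := by
    simp [← hk, quatI_eq_coeComplex]
    ring
  rw [re_left, re_right] at h_re
  have h_poly : -8 * (z.re ^ 4 * z.im ^ 2) = 0 := by
    linear_combination h_re - (z.re ^ 4 + 2 * z.re ^ 2 * z.im ^ 2 - z.im ^ 4) * hz_sq
  simpa [hz_im] using h_poly

theorem IsAssocSelfSqSq.mul_mul_star_cases {z : ℂ} (ha : ‖a‖ = 1) (hz : ‖z‖ = 1)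
    (h : IsAssocSelfSqSq fun x y => a * x * z * star y) :
    (a = 1 ∨ a = -1) ∧ ((z = 1 ∨ z = -1) ∨ (z = Complex.I ∨ z = -Complex.I)) := by
  by_cases hz_im : z.im = 0
  · have hz_cases : z = 1 ∨ z = -1 := by
      rw [← Complex.abs_re_eq_norm.2 hz_im, abs_eq zero_le_one] at hz
      exact hz.imp (Complex.ext · hz_im) (Complex.ext · (by simpa using hz_im))
    exact ⟨h.eq_one_or_eq_neg_one_of_mul_mul_star ha (coeComplex_eq_or_eq_neg hz_cases),
      .inl hz_cases⟩
  · obtain ⟨w, rfl⟩ := eq_coeComplex_of_commute hz_im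
      (h.commute_of_mul_mul_star ha ((norm_coeComplex z).trans hz))
    have hwz : w = z ^ 2 ∨ w = -z ^ 2 := by
      rw [← sq_eq_sq_iff_eq_or_eq_neg, ← pow_mul,
        h.sq_eq_pow_four_of_mul_mul_star ((norm_coeComplex w).symm.trans ha) hz]
    have hz_re : z.re = 0 := h.re_eq_zero_of_mul_mul_star hz hz_im (by
      simpa only [coeComplex_pow] using coeComplex_eq_or_eq_neg hwz)
    have hz_cases : z = Complex.I ∨ z = -Complex.I := by
      rw [← Complex.abs_im_eq_norm.2 hz_re, abs_eq zero_le_one] at hz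
      exact hz.imp (Complex.ext hz_re ·) (Complex.ext (by simpa using hz_re) ·)
    have hz_sq : z ^ 2 = -1 := by rcases hz_cases with rfl | rfl <;> simp
    rw [hz_sq, neg_neg] at hwz
    exact ⟨coeComplex_eq_or_eq_neg hwz.symm, .inr hz_cases⟩

end Identity

/-! ### Reduction to the normal forms -/

section Isomorphism

open scoped Quaternion

variable {A B : Type*} [AddCommGroup A] [Module ℝ A] [AddCommGroup B] [Module ℝ B]

/-- The real algebras `A` and `B` with products `m` and `m'` are isomorphic. Products are plain
functions, so that they may be written with `fun x y => _`. -/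
def IsAlgIso (m : A → A → A) (m' : B → B → B) : Prop :=
  ∃ e : A ≃ₗ[ℝ] B, ∀ x y, e (m x y) = m' (e x) (e y)

variable {m : A → A → A} {m' : B → B → B}

theorem IsAlgIso.symm (h : IsAlgIso m m') : IsAlgIso m' m := by
  obtain ⟨e, he⟩ := h
  exact ⟨e.symm, fun x y => by simp [e.symm_apply_eq, he]⟩

theorem IsAlgIso.trans {C : Type*} [AddCommGroup C] [Module ℝ C] {m'' : C → C → C}
    (h : IsAlgIso m m') (h' : IsAlgIso m' m'') : IsAlgIso m m'' := by
  obtain ⟨e, he⟩ := h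
  obtain ⟨e', he'⟩ := h'
  exact ⟨e.trans e', fun x y => by simp [he, he']⟩

theorem IsAssocSelfSqSq.of_isAlgIso (hm : IsAssocSelfSqSq m) (h : IsAlgIso m m') :
    IsAssocSelfSqSq m' := by
  obtain ⟨e, he⟩ := h.symm
  exact fun x => e.injective (by simp only [he, hm (e x)])

theorem isAssocSelfSqSq_mul {R : Type*} [Semigroup R] : IsAssocSelfSqSq fun x y : R => x * y :=
  fun x => by simp only [mul_assoc]

theorem isAssocSelfSqSq_mul_star {R : Type*} [Semigroup R] [StarMul R] :
    IsAssocSelfSqSq fun x y : R => x * star y :=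
  fun x => by simp [mul_assoc]

theorem isAssocSelfSqSq_mul_quatI_mul_star :
    IsAssocSelfSqSq fun x y : ℍ[ℝ] => x * quatI * star y :=
  fun x => by simp [mul_assoc, star_quatI]

theorem isAlgIso_of_mul_mul {m m' : ℍ[ℝ] → ℍ[ℝ] → ℍ[ℝ]} {u v : ℍ[ℝ]} (hu : u ≠ 0) (hv : v ≠ 0)
    (h : ∀ x y, u * m x y * v = m' (u * x * v) (u * y * v)) : IsAlgIso m m' := by
  have h_inj : Function.Injective (LinearMap.mulLeftRight ℝ (u, v)) := fun x y hxy => by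
    simpa [hu, hv] using hxy
  exact ⟨LinearEquiv.ofInjectiveEndo _ h_inj, h⟩

variable {p q r a b : ℍ[ℝ]}

theorem exists_isAlgIso_mul_mul_mul (hp : ‖p‖ = 1) (hq : ‖q‖ = 1) :
    ∃ a, ‖a‖ = 1 ∧ IsAlgIso (fun x y => p * x * q * y * r) (fun x y => a * x * y * r) := by
  have hq0 := quaternion_ne_zero_of_norm_eq_one hq
  exact ⟨q * p * q⁻¹, by simp [hp, hq],
    isAlgIso_of_mul_mul hq0 one_ne_zero fun x y => by simp [mul_assoc, hq0]⟩

theorem exists_isAlgIso_star_mul_star (hp : ‖p‖ = 1) (hq : ‖q‖ = 1) (hr : ‖r‖ = 1) :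
    ∃ a b : ℍ[ℝ], ‖a‖ = 1 ∧ ‖b‖ = 1 ∧ IsAlgIso (fun x y : ℍ[ℝ] => p * star x * q * star y * r)
      (fun x y => a * star x * star y * b) := by
  have hq0 := quaternion_ne_zero_of_norm_eq_one hq
  exact ⟨q⁻¹ * p, q⁻¹ * r, by simp [hp, hq], by simp [hq, hr],
    isAlgIso_of_mul_mul (inv_ne_zero hq0) one_ne_zero fun x y => by
      simp [mul_assoc, hq0, quaternion_star_eq_inv hq]⟩

theorem exists_isAlgIso_star_mul (hp : ‖p‖ = 1) (hq : ‖q‖ = 1) (hr : ‖r‖ = 1) :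
    ∃ (z : ℂ) (b : ℍ[ℝ]), ‖z‖ = 1 ∧ ‖b‖ = 1 ∧
      IsAlgIso (fun x y : ℍ[ℝ] => p * star x * q * y * r) (fun x y => star x * z * y * b) := by
  obtain ⟨v, hv, z, hz⟩ := exists_conj_eq_coeComplex q
  have hp0 := quaternion_ne_zero_of_norm_eq_one hp
  have hv0 := quaternion_ne_zero_of_norm_eq_one hv
  refine ⟨z, v * p * r * p⁻¹ * v⁻¹, by simp [← norm_coeComplex, ← hz, hv, hq], by simp [hp, hr, hv],
    isAlgIso_of_mul_mul hv0 (mul_ne_zero (inv_ne_zero hp0) (inv_ne_zero hv0)) fun x y => ?_⟩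
  simp [← hz, mul_assoc, hp0, hv0, quaternion_star_eq_inv hv, quaternion_star_eq_inv hp]

theorem exists_isAlgIso_mul_star (hp : ‖p‖ = 1) (hq : ‖q‖ = 1) (hr : ‖r‖ = 1) :
    ∃ (a : ℍ[ℝ]) (z : ℂ), ‖a‖ = 1 ∧ ‖z‖ = 1 ∧
      IsAlgIso (fun x y : ℍ[ℝ] => p * x * q * star y * r) (fun x y => a * x * z * star y) := by
  obtain ⟨v, hv, z, hz⟩ := exists_conj_eq_coeComplex q
  have hr0 := quaternion_ne_zero_of_norm_eq_one hr
  have hv0 := quaternion_ne_zero_of_norm_eq_one hv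
  refine ⟨v * r⁻¹ * p * r * v⁻¹, z, by simp [hp, hr, hv], by simp [← norm_coeComplex, ← hz, hv, hq],
    isAlgIso_of_mul_mul (mul_ne_zero hv0 (inv_ne_zero hr0)) (inv_ne_zero hv0) fun x y => ?_⟩
  simp [← hz, mul_assoc, hr0, hv0, quaternion_star_eq_inv hv, quaternion_star_eq_inv hr]

theorem isAlgIso_mul (ha : a = 1 ∨ a = -1) (hb : b = 1 ∨ b = -1) :
    IsAlgIso (fun x y => a * x * y * b) (fun x y : ℍ[ℝ] => x * y) := by
  refine isAlgIso_of_mul_mul (u := a) (v := b) ?_ ?_ fun x y => ?_ <;>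
    rcases ha with rfl | rfl <;> rcases hb with rfl | rfl <;> simp

theorem isAlgIso_mul_mul_star {c : ℍ[ℝ]} (ha : a = 1 ∨ a = -1) (hbc : b = c ∨ b = -c) :
    IsAlgIso (fun x y => a * x * b * star y) (fun x y => x * c * star y) := by
  have ha0 : a ≠ 0 := by rcases ha with rfl | rfl <;> simp
  rcases hbc with rfl | rfl
  · refine isAlgIso_of_mul_mul ha0 one_ne_zero fun x y => ?_
    rcases ha with rfl | rfl <;> simp
  · refine isAlgIso_of_mul_mul ha0 (neg_ne_zero.2 one_ne_zero) fun x y => ?_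
    rcases ha with rfl | rfl <;> simp

end Isomorphism

section Classification

open Module
open scoped Quaternion

variable {A : Type*} [NormedAddCommGroup A] [NormedSpace ℝ A] {mul : A →ₗ[ℝ] A →ₗ[ℝ] A}

theorem IsAbsoluteValued.exists_quaternion_isotopy (h : IsAbsoluteValued mul)
    (hdim : finrank ℝ A = 4) : ∃ (e : A ≃ₗ[ℝ] ℍ[ℝ]) (f g : ℍ[ℝ] ≃ₗᵢ[ℝ] ℍ[ℝ]),
      ∀ x y, e (mul x y) = f (e x) * g (e y) := by
  have : FiniteDimensional ℝ A := .of_finrank_eq_succ hdim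
  have : Nontrivial A := nontrivial_of_finrank_eq_succ hdim
  have : InnerProductSpaceable A := h.innerProductSpaceable
  let := InnerProductSpace.ofNorm (𝕜 := ℝ) (E := A) InnerProductSpaceable.parallelogram_identity
  obtain ⟨n, o, R, L, hn, hmul⟩ := h.exists_unital_isotope
  obtain ⟨F, hF⟩ := hn.exists_linearIsometryEquiv_quaternion hdim
  exact ⟨F.toLinearEquiv, (F.symm.trans R).trans F, (F.symm.trans L).trans F,
    fun x y => by simp [hmul, hF]⟩

theorem IsAbsoluteValued.exists_isAlgIso (h : IsAbsoluteValued mul) (hdim : finrank ℝ A = 4) :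
    ∃ p q r : ℍ[ℝ], ‖p‖ = 1 ∧ ‖q‖ = 1 ∧ ‖r‖ = 1 ∧
      (IsAlgIso (mul · ·) (fun x y => p * x * q * y * r) ∨
        IsAlgIso (mul · ·) (fun x y => p * x * q * star y * r) ∨
        IsAlgIso (mul · ·) (fun x y => p * star x * q * y * r) ∨
        IsAlgIso (mul · ·) (fun x y => p * star x * q * star y * r)) := by
  obtain ⟨e, f, g, he⟩ := h.exists_quaternion_isotopy hdim
  obtain ⟨p, q, hp, hq, hf⟩ := exists_linearIsometryEquiv_quaternion_eq f
  obtain ⟨p', r, hp', hr, hg⟩ := exists_linearIsometryEquiv_quaternion_eq g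
  refine ⟨p, q * p', r, hp, by simp [hq, hp'], hr, ?_⟩
  rcases hf with hf | hf <;> rcases hg with hg | hg
  · exact .inl ⟨e, fun x y => by simp only [he, hf, hg, mul_assoc]⟩
  · exact .inr (.inl ⟨e, fun x y => by simp only [he, hf, hg, mul_assoc]⟩)
  · exact .inr (.inr (.inl ⟨e, fun x y => by simp only [he, hf, hg, mul_assoc]⟩))
  · exact .inr (.inr (.inr ⟨e, fun x y => by simp only [he, hf, hg, mul_assoc]⟩))

theorem IsAssocSelfSqSq.isAlgIso_cases (h : IsAssocSelfSqSq (mul · ·)) (hmul : IsAbsoluteValued mul)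
    (hdim : finrank ℝ A = 4) :
    IsAlgIso (mul · ·) (fun x y : ℍ[ℝ] => x * y) ∨
      IsAlgIso (mul · ·) (fun x y : ℍ[ℝ] => x * star y) ∨
      IsAlgIso (mul · ·) (fun x y : ℍ[ℝ] => x * quatI * star y) := by
  obtain ⟨p, q, r, hp, hq, hr, hiso | hiso | hiso | hiso⟩ := hmul.exists_isAlgIso hdim
  · obtain ⟨a, ha, hiso'⟩ := exists_isAlgIso_mul_mul_mul (r := r) hp hq
    have hiso := hiso.trans hiso'
    obtain ⟨ha, hr⟩ := (h.of_isAlgIso hiso).mul_mul_mul_cases ha hr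
    exact .inl (hiso.trans (isAlgIso_mul ha hr))
  · obtain ⟨a, z, ha, hz, hiso'⟩ := exists_isAlgIso_mul_star hp hq hr
    have hiso := hiso.trans hiso'
    obtain ⟨ha, hz | hz⟩ := (h.of_isAlgIso hiso).mul_mul_star_cases ha hz
    · exact .inr (.inl (by
        simpa using hiso.trans (isAlgIso_mul_mul_star ha (coeComplex_eq_or_eq_neg hz))))
    · exact .inr (.inr (hiso.trans (isAlgIso_mul_mul_star ha (coeComplex_eq_or_eq_neg hz))))
  · obtain ⟨z, b, hz, hb, hiso'⟩ := exists_isAlgIso_star_mul hp hq hr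
    exact ((h.of_isAlgIso (hiso.trans hiso')).false_of_star_mul hz hb).elim
  · obtain ⟨a, b, ha, hb, hiso'⟩ := exists_isAlgIso_star_mul_star hp hq hr
    exact ((h.of_isAlgIso (hiso.trans hiso')).false_of_star_mul_star ha hb).elim

end Classification

/-- A 4-dimensional absolute-valued real algebra satisfies the identity `(x, x², x²) = 0`
if and only if it is isomorphic to `ℍ`, to `ℍ*` (product `x ⊙ y = x * ȳ`), or to
`ℍ*(1,i)` (product `x ⊙ y = x * i * ȳ`). -/
theorem stmt_11 {A : Type*} [NormedAddCommGroup A] [NormedSpace ℝ A]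
    (mul : A →ₗ[ℝ] A →ₗ[ℝ] A)
    (habs : ∀ x y : A, ‖mul x y‖ = ‖x‖ * ‖y‖)
    (hdim : Module.finrank ℝ A = 4) :
    (∀ x : A, mul (mul x (mul x x)) (mul x x) = mul x (mul (mul x x) (mul x x)))
      ↔ ((∃ e : A ≃ₗ[ℝ] Quaternion ℝ, ∀ x y : A, e (mul x y) = e x * e y) ∨
          (∃ e : A ≃ₗ[ℝ] Quaternion ℝ, ∀ x y : A, e (mul x y) = e x * star (e y)) ∨
          (∃ e : A ≃ₗ[ℝ] Quaternion ℝ,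
            ∀ x y : A, e (mul x y) = e x * quatI * star (e y))) := by
  constructor
  · exact fun h => IsAssocSelfSqSq.isAlgIso_cases h habs hdim
  · rintro (h | h | h)
    · exact isAssocSelfSqSq_mul.of_isAlgIso (IsAlgIso.symm h)
    · exact isAssocSelfSqSq_mul_star.of_isAlgIso (IsAlgIso.symm h)
    · exact isAssocSelfSqSq_mul_quatI_mul_star.of_isAlgIso (IsAlgIso.symm h)
end
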